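/- arXiv:hep-th/0304246 — 4 statements merged into one kernel-verified Lean document; each statement's English description precedes it below -/
import Mathlib

section
/- Affine roots of E10 have multiplicity 8: let δ = (0,1,2,3,4,5,6,4,2,3) ∈ ℕ^{10} in the coordinates of A(E10) (the null root of the affine E9 subalgebra, satisfying δᵀ A(E10) δ = 0). Then for every integer k ≥ 1 the root space of kδ in g(A(E10)), namely the simultaneous eigenspace {x : [h_i,x] = (∑_j A(E10)_{ij} k δ_j) x for all i}, has dimension 8, i.e. mult(kδ) = 8. -/
noncomputable section

open CartanMatrix

/-- A generalized Cartan matrix: `A i i = 2`, off-diagonal entries are non-positive, and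
`A i j = 0 ↔ A j i = 0`. -/
def IsGCM {B : Type*} (A : Matrix B B ℤ) : Prop :=
  (∀ i, A i i = 2) ∧ (∀ i j, i ≠ j → A i j ≤ 0) ∧ (∀ i j, A i j = 0 ↔ A j i = 0)

/-- The images in the Kac–Moody algebra `Matrix.ToLieAlgebra ℚ A` of the generators of the
free Lie algebra. -/
def KMgen {B : Type*} [DecidableEq B] (A : Matrix B B ℤ) (x : Generators B) :
    Matrix.ToLieAlgebra ℚ A :=
  LieSubmodule.Quotient.mk (N := Relations.toIdeal ℚ A) (FreeLieAlgebra.of ℚ x)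

/-- The Cartan generator `h i`. -/
def gH {B : Type*} [DecidableEq B] (A : Matrix B B ℤ) (i : B) : Matrix.ToLieAlgebra ℚ A :=
  KMgen A (Generators.H i)

/-- The raising generator `e i`. -/
def gE {B : Type*} [DecidableEq B] (A : Matrix B B ℤ) (i : B) : Matrix.ToLieAlgebra ℚ A :=
  KMgen A (Generators.E i)

/-- The lowering generator `f i`. -/
def gF {B : Type*} [DecidableEq B] (A : Matrix B B ℤ) (i : B) : Matrix.ToLieAlgebra ℚ A :=
  KMgen A (Generators.F i)

/-- The root space of `g(A)` attached to `n : B → ℤ`: the simultaneous eigenspace of the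
adjoint action of the Cartan generators `h i`, with eigenvalues `∑ j, A i j * n j`. -/
def rootSpace {B : Type*} [Fintype B] [DecidableEq B] (A : Matrix B B ℤ) (n : B → ℤ) :
    Submodule ℚ (Matrix.ToLieAlgebra ℚ A) :=
  ⨅ i, Module.End.eigenspace
    (LieAlgebra.ad ℚ (Matrix.ToLieAlgebra ℚ A) (gH A i)) ((∑ j, A i j * n j : ℤ) : ℚ)

/-- The multiplicity of `n` in `g(A)`: the dimension of the root space. -/
def rootMult {B : Type*} [Fintype B] [DecidableEq B] (A : Matrix B B ℤ) (n : B → ℤ) : ℕ :=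
  Module.finrank ℚ (rootSpace A n)

/-- The Cartan matrix of `E10` (node 1 ↦ index `0` is the overextended node; indices `0`–`8`
form a chain and index `9` is attached to index `6`). -/
def E10M : Matrix (Fin 10) (Fin 10) ℤ := fun i j =>
  if i = j then 2
  else if (i.val + 1 = j.val ∧ j.val ≤ 8) ∨ (j.val + 1 = i.val ∧ i.val ≤ 8) ∨
          (i.val = 6 ∧ j.val = 9) ∨ (i.val = 9 ∧ j.val = 6) then -1
  else 0

namespace E10P

/-- Pairing of the `i`-th simple coroot with a lattice vector. -/
def wt (i : Fin 10) (n : Fin 10 → ℤ) : ℤ := ∑ j, E10M i j * n j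

/-- The bilinear form. -/
def ip (n m : Fin 10 → ℤ) : ℤ := ∑ i, n i * wt i m

/-- Simple roots. -/
def al (i : Fin 10) : Fin 10 → ℤ := Pi.single i 1

/-- The null root. -/
def dl : Fin 10 → ℤ := ![0,1,2,3,4,5,6,4,2,3]

lemma E10M_symm (i j : Fin 10) : E10M i j = E10M j i := by
  have : ∀ i j : Fin 10, decide ((E10M i j : ℤ) = E10M j i) = true := by decide
  exact of_decide_eq_true (this i j)

lemma E10M_self (i : Fin 10) : E10M i i = 2 := by simp [E10M]

lemma E10M_off (i j : Fin 10) (h : i ≠ j) : E10M i j = 0 ∨ E10M i j = -1 := by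
  have : ∀ i j : Fin 10, (i == j || decide ((E10M i j : ℤ) = 0) || decide ((E10M i j : ℤ) = -1)) = true := by
    decide
  simpa [h] using this i j

lemma wt_add (i n m) : wt i (n + m) = wt i n + wt i m := by
  simp [wt, mul_add, Finset.sum_add_distrib]

lemma wt_smul (i) (c : ℤ) (n) : wt i (c • n) = c * wt i n := by
  simp only [wt, Pi.smul_apply, smul_eq_mul, Finset.mul_sum]
  exact Finset.sum_congr rfl fun j _ => by ring

lemma wt_neg (i n) : wt i (-n) = - wt i n := by
  simp [wt]

lemma wt_sub (i n m) : wt i (n - m) = wt i n - wt i m := by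
  rw [sub_eq_add_neg, wt_add, wt_neg]; ring

lemma wt_zero (i) : wt i 0 = 0 := by simp [wt]

lemma wt_al (i j) : wt i (al j) = E10M i j := by
  simp [wt, al, Pi.single_apply]

lemma wt_dl (i : Fin 10) : wt i dl = if i = 0 then -1 else 0 := by
  revert i; decide

lemma ip_add_left (a b c) : ip (a + b) c = ip a c + ip b c := by
  simp [ip, add_mul, Finset.sum_add_distrib]

lemma ip_symm (a b) : ip a b = ip b a := by
  simp only [ip, wt, Finset.mul_sum]
  rw [Finset.sum_comm]
  refine Finset.sum_congr rfl fun j _ => Finset.sum_congr rfl fun i _ => ?_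
  rw [E10M_symm i j]; ring

lemma ip_add_right (a b c) : ip a (b + c) = ip a b + ip a c := by
  rw [ip_symm, ip_add_left, ip_symm b, ip_symm c]

lemma ip_smul_left (c : ℤ) (a b) : ip (c • a) b = c * ip a b := by
  simp [ip, Finset.mul_sum, mul_assoc]

lemma ip_smul_right (c : ℤ) (a b) : ip a (c • b) = c * ip a b := by
  rw [ip_symm, ip_smul_left, ip_symm]

lemma ip_neg_left (a b) : ip (-a) b = - ip a b := by simp [ip]
lemma ip_neg_right (a b) : ip a (-b) = - ip a b := by rw [ip_symm, ip_neg_left, ip_symm]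
lemma ip_sub_left (a b c) : ip (a - b) c = ip a c - ip b c := by
  rw [sub_eq_add_neg, ip_add_left, ip_neg_left]; ring
lemma ip_sub_right (a b c) : ip a (b - c) = ip a b - ip a c := by
  rw [ip_symm, ip_sub_left, ip_symm b, ip_symm c]

lemma ip_al_left (i n) : ip (al i) n = wt i n := by
  simp [ip, al, Pi.single_apply]

lemma ip_al_right (i n) : ip n (al i) = wt i n := by rw [ip_symm, ip_al_left]

lemma ip_dl_right (n) : ip n dl = - n 0 := by
  simp [ip, wt_dl]

lemma ip_dl_left (n) : ip dl n = - n 0 := by rw [ip_symm, ip_dl_right]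

lemma dl_zero : dl 0 = 0 := rfl

lemma al_apply (i j) : al i j = if j = i then 1 else 0 := by
  simp [al, Pi.single_apply]

lemma wt_inj (n m : Fin 10 → ℤ) (h : ∀ i, wt i n = wt i m) : n = m := by
  have h' : ∀ i, wt i (n - m) = 0 := fun i => by rw [wt_sub, h, sub_self]
  suffices ∀ k : Fin 10 → ℤ, (∀ i, wt i k = 0) → k = 0 from sub_eq_zero.mp (this _ h')
  intro k hk
  have h0 := hk 0
  have h1 := hk 1
  have h2 := hk 2
  have h3 := hk 3
  have h4 := hk 4
  have h5 := hk 5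
  have h6 := hk 6
  have h7 := hk 7
  have h8 := hk 8
  have h9 := hk 9
  simp [wt, Fin.sum_univ_succ, E10M] at h0 h1 h2 h3 h4 h5 h6 h7 h8 h9
  ext i
  fin_cases i <;> simp <;> lia

variable {L : Type*} [LieRing L] [LieAlgebra ℚ L]

/-- Chevalley generators satisfying the relations. -/
structure KM (e f h : Fin 10 → L) : Prop where
  hh : ∀ i j, ⁅h i, h j⁆ = 0
  ef : ∀ i, ⁅e i, f i⁆ = h i
  ef0 : ∀ i j, i ≠ j → ⁅e i, f j⁆ = 0
  he : ∀ i j, ⁅h i, e j⁆ = (E10M i j : ℚ) • e j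
  hf : ∀ i j, ⁅h i, f j⁆ = -((E10M i j : ℚ) • f j)
  se : ∀ i j, ⁅e i, ⁅e i, e j⁆⁆ = 0
  sf : ∀ i j, ⁅f i, ⁅f i, f j⁆⁆ = 0
  gen : ∀ K : LieSubalgebra ℚ L, (∀ i, e i ∈ K) → (∀ i, f i ∈ K) → (∀ i, h i ∈ K) → K = ⊤
  ne : e 1 ≠ 0

/-- Root spaces. -/
def RS (h : Fin 10 → L) (n : Fin 10 → ℤ) : Submodule ℚ L :=
  ⨅ i, Module.End.eigenspace (LieAlgebra.ad ℚ L (h i)) ((wt i n : ℤ) : ℚ)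

lemma mem_RS {h : Fin 10 → L} {n} {x : L} :
    x ∈ RS h n ↔ ∀ i, ⁅h i, x⁆ = (wt i n : ℚ) • x := by
  simp [RS]

lemma lie_mem {h : Fin 10 → L} {n m q} {x y : L} (hx : x ∈ RS h n) (hy : y ∈ RS h m)
    (hq : n + m = q) : ⁅x, y⁆ ∈ RS h q := by
  subst hq
  rw [mem_RS] at *
  intro i
  rw [leibniz_lie, hx, hy, wt_add]
  push_cast
  rw [smul_lie, lie_smul, add_smul]

namespace KM
variable {e f h : Fin 10 → L} (S : KM e f h)
include S

lemma e_mem (i) : e i ∈ RS h (al i) := by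
  rw [mem_RS]; intro j; rw [S.he, wt_al]

lemma f_mem (i) : f i ∈ RS h (-al i) := by
  rw [mem_RS]; intro j; rw [S.hf, wt_neg, wt_al]; simp

lemma h_mem (i) : h i ∈ RS h 0 := by
  rw [mem_RS]; intro j; rw [S.hh, wt_zero]; simp

lemma lie_h {n x} (hx : x ∈ RS h n) (i) : ⁅h i, x⁆ = (wt i n : ℚ) • x := mem_RS.1 hx i

lemma indep : iSupIndep (RS h) := by
  let g : Fin 10 → Module.End ℚ L := fun i => LieAlgebra.ad ℚ L (h i)
  have hc : ∀ i j, Commute (g j) (g i) := by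
    intro i j
    ext x
    change ⁅h j, ⁅h i, x⁆⁆ = ⁅h i, ⁅h j, x⁆⁆
    rw [leibniz_lie, S.hh, zero_lie, zero_add]
  have h1 : iSupIndep fun χ : Fin 10 → ℚ => ⨅ i, (g i).maxGenEigenspace (χ i) :=
    Module.End.independent_iInf_maxGenEigenspace_of_forall_mapsTo g
      (fun i j φ => Module.End.mapsTo_maxGenEigenspace_of_comm (hc i j) φ)
  let c : (Fin 10 → ℤ) → (Fin 10 → ℚ) := fun n i => ((wt i n : ℤ) : ℚ)
  have h2 : Function.Injective c := by
    intro n m hnm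
    apply wt_inj
    intro i
    have h4 : ((wt i n : ℤ) : ℚ) = ((wt i m : ℤ) : ℚ) := congrFun hnm i
    exact_mod_cast h4
  have h3 : iSupIndep fun n => ⨅ i, (g i).maxGenEigenspace (c n i) :=
    h1.comp h2
  have h5 : RS h ≤ fun n => ⨅ i, (g i).maxGenEigenspace (c n i) := by
    intro n
    refine iInf_mono fun i => ?_
    exact Module.End.genEigenspace_le_maximal (g i) _ 1
  exact h3.mono h5

/-- positive words -/
def pw (e : Fin 10 → L) (l : List (Fin 10)) (i : Fin 10) : L :=
  l.foldr (fun j x => ⁅e j, x⁆) (e i)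

/-- degree of a word -/
def dg (l : List (Fin 10)) (i : Fin 10) : Fin 10 → ℤ :=
  l.foldr (fun j x => al j + x) (al i)

lemma pw_mem (l i) : pw e l i ∈ RS h (dg l i) := by
  induction l with
  | nil => exact S.e_mem i
  | cons j l ih => exact lie_mem (S.e_mem j) ih rfl

lemma nw_mem (l i) : pw f l i ∈ RS h (-dg l i) := by
  induction l with
  | nil => exact S.f_mem i
  | cons j l ih => exact lie_mem (S.f_mem j) ih (by simp [dg]; abel)

/-- Swapped generators (Chevalley involution). -/
lemma symm (hf1 : f 1 ≠ 0) : KM f e (fun i => - h i) where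
  hh i j := by simp [S.hh]
  ef i := by rw [← lie_skew, S.ef]
  ef0 i j hij := by rw [← lie_skew, S.ef0 j i hij.symm, neg_zero]
  he i j := by rw [neg_lie, S.hf, neg_neg]
  hf i j := by rw [neg_lie, S.he]
  se := S.sf
  sf := S.se
  gen K h1 h2 h3 := S.gen K h2 h1 (fun i => by simpa using K.neg_mem (h3 i))
  ne := hf1

/-- closure of one half -/
lemma half_closed (l i j) : ⁅f j, pw e l i⁆ ∈
    Submodule.span ℚ (Set.range h) ⊔ Submodule.span ℚ (Set.range fun p : List (Fin 10) × Fin 10 =>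
      pw e p.1 p.2) := by
  set P := Submodule.span ℚ (Set.range fun p : List (Fin 10) × Fin 10 => pw e p.1 p.2) with hP
  have hp : ∀ l i, pw e l i ∈ P := fun l i => Submodule.subset_span ⟨(l, i), rfl⟩
  have hu : ∀ k, ∀ x ∈ Submodule.span ℚ (Set.range h) ⊔ P, ⁅e k, x⁆ ∈ P := by
    intro k x hx
    have : Submodule.span ℚ (Set.range h) ⊔ P ≤ P.comap (LieAlgebra.ad ℚ L (e k)).toAddMonoidHom.toRatLinearMap := by
      rw [sup_le_iff, hP, Submodule.span_le, Submodule.span_le]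
      constructor
      · rintro _ ⟨a, rfl⟩
        simp only [Submodule.comap_coe, Set.mem_preimage, AddMonoidHom.coe_toRatLinearMap,
          LinearMap.toAddMonoidHom_coe, LieAlgebra.ad_apply, SetLike.mem_coe]
        rw [← lie_skew, S.he]
        exact Submodule.neg_mem _ (Submodule.smul_mem _ _ (hp [] k))
      · rintro _ ⟨a, rfl⟩
        exact hp (k :: a.1) a.2
    exact this hx
  induction l with
  | nil =>
    apply Submodule.mem_sup_left
    change ⁅f j, e i⁆ ∈ _
    by_cases hij : i = j
    · subst hij
      rw [← lie_skew, S.ef]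
      exact Submodule.neg_mem _ (Submodule.subset_span ⟨i, rfl⟩)
    · rw [← lie_skew, S.ef0 i j hij, neg_zero]; exact Submodule.zero_mem _
  | cons k l ih =>
    apply Submodule.mem_sup_right
    change ⁅f j, ⁅e k, pw e l i⁆⁆ ∈ _
    rw [leibniz_lie]
    refine Submodule.add_mem _ ?_ (hu k _ ih)
    by_cases hij : k = j
    · subst hij
      rw [← lie_skew (f k), S.ef, neg_lie, S.lie_h (S.pw_mem l i)]
      exact Submodule.neg_mem _ (Submodule.smul_mem _ _ (hp l i))
    · rw [← lie_skew (f j), S.ef0 k j hij, neg_zero, zero_lie]; exact Submodule.zero_mem _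

lemma f1_ne : f 1 ≠ 0 := by
  intro h0
  have h1 : h 1 = 0 := by rw [← S.ef, h0, lie_zero]
  have h2 := S.he 1 1
  rw [h1, zero_lie, E10M_self] at h2
  exact S.ne (by simpa using h2.symm)

/-- A subspace containing the generators and closed under their adjoint action is everything. -/
lemma top_of_closed (U : Submodule ℚ L) (he : ∀ i, e i ∈ U) (hf : ∀ i, f i ∈ U) (hh : ∀ i, h i ∈ U)
    (ce : ∀ i, ∀ x ∈ U, ⁅e i, x⁆ ∈ U) (cf : ∀ i, ∀ x ∈ U, ⁅f i, x⁆ ∈ U)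
    (ch : ∀ i, ∀ x ∈ U, ⁅h i, x⁆ ∈ U) : U = ⊤ := by
  let N : LieSubalgebra ℚ L :=
    { carrier := {x | ∀ y ∈ U, ⁅x, y⁆ ∈ U}
      add_mem' := fun {a b} ha hb y hy => by
        rw [add_lie]; exact U.add_mem (ha y hy) (hb y hy)
      zero_mem' := fun y hy => by rw [zero_lie]; exact U.zero_mem
      smul_mem' := fun c x hx y hy => by rw [smul_lie]; exact U.smul_mem _ (hx y hy)
      lie_mem' := fun {a b} ha hb y hy => by
        rw [lie_lie]; exact U.sub_mem (ha _ (hb y hy)) (hb _ (ha y hy)) }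
  have hN : N = ⊤ := S.gen N ce cf ch
  have hN' : ∀ x, ∀ y ∈ U, ⁅x, y⁆ ∈ U := fun x => by
    have : x ∈ N := by rw [hN]; trivial
    exact this
  let K : LieSubalgebra ℚ L := { U with lie_mem' := fun {a b} _ hb => hN' a b hb }
  have hK : K = ⊤ := S.gen K he hf hh
  rw [eq_top_iff]
  intro x _
  have : x ∈ K := by rw [hK]; trivial
  exact this

lemma span_top : Submodule.span ℚ (Set.range h) ⊔
    Submodule.span ℚ (Set.range fun p : List (Fin 10) × Fin 10 => pw e p.1 p.2) ⊔
    Submodule.span ℚ (Set.range fun p : List (Fin 10) × Fin 10 => pw f p.1 p.2) = ⊤ := by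
  set Hs := Submodule.span ℚ (Set.range h) with hHs
  set P := Submodule.span ℚ (Set.range fun p : List (Fin 10) × Fin 10 => pw e p.1 p.2) with hP
  set N := Submodule.span ℚ (Set.range fun p : List (Fin 10) × Fin 10 => pw f p.1 p.2) with hN
  have hp : ∀ l i, pw e l i ∈ P := fun l i => Submodule.subset_span ⟨(l, i), rfl⟩
  have hn : ∀ l i, pw f l i ∈ N := fun l i => Submodule.subset_span ⟨(l, i), rfl⟩
  have hHm : ∀ i, h i ∈ Hs := fun i => Submodule.subset_span ⟨i, rfl⟩
  have lP : P ≤ Hs ⊔ P ⊔ N := le_sup_right.trans le_sup_left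
  have lH : Hs ≤ Hs ⊔ P ⊔ N := le_sup_left.trans le_sup_left
  have lN : N ≤ Hs ⊔ P ⊔ N := le_sup_right
  have key : ∀ g : L, (∀ i, ⁅g, h i⁆ ∈ Hs ⊔ P ⊔ N) → (∀ l i, ⁅g, pw e l i⁆ ∈ Hs ⊔ P ⊔ N) →
      (∀ l i, ⁅g, pw f l i⁆ ∈ Hs ⊔ P ⊔ N) → ∀ x ∈ Hs ⊔ P ⊔ N, ⁅g, x⁆ ∈ Hs ⊔ P ⊔ N := by
    intro g h1 h2 h3 x hx
    have : Hs ⊔ P ⊔ N ≤ (Hs ⊔ P ⊔ N).comap (LieAlgebra.ad ℚ L g : L →ₗ[ℚ] L) := by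
      refine sup_le (sup_le ?_ ?_) ?_
      · rw [hHs, Submodule.span_le]; rintro _ ⟨a, rfl⟩; exact h1 a
      · rw [hP, Submodule.span_le]; rintro _ ⟨a, rfl⟩; exact h2 a.1 a.2
      · rw [hN, Submodule.span_le]; rintro _ ⟨a, rfl⟩; exact h3 a.1 a.2
    exact this hx
  refine S.top_of_closed _ (fun i => lP (hp [] i)) (fun i => lN (hn [] i)) (fun i => lH (hHm i))
    (fun i => key _ ?_ ?_ ?_) (fun i => key _ ?_ ?_ ?_) (fun i => key _ ?_ ?_ ?_)
  · intro j; rw [← lie_skew, S.he]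
    exact lP (Submodule.neg_mem _ (Submodule.smul_mem _ _ (hp [] i)))
  · intro l j; exact lP (hp (i :: l) j)
  · intro l j
    have := (S.symm S.f1_ne).half_closed l j i
    rw [show Set.range (fun i => - h i) = - Set.range h by
      ext x; simp [neg_eq_iff_eq_neg], Submodule.span_neg] at this
    exact (sup_le lH lN) this
  · intro j; rw [← lie_skew, S.hf, neg_neg]
    exact lN (Submodule.smul_mem _ _ (hn [] i))
  · intro l j
    exact (sup_le lH lP) (S.half_closed l j i)
  · intro l j; exact lN (hn (i :: l) j)
  · intro j; rw [S.hh]; exact Submodule.zero_mem _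
  · intro l j; rw [S.lie_h (S.pw_mem l j)]; exact lP (Submodule.smul_mem _ _ (hp l j))
  · intro l j; rw [S.lie_h (S.nw_mem l j)]; exact lN (Submodule.smul_mem _ _ (hn l j))

/-- Each root space is spanned by the spanning vectors of that degree. -/
lemma RS_le (n : Fin 10 → ℤ) (V : Submodule ℚ L)
    (h0 : n = 0 → ∀ i, h i ∈ V)
    (h1 : ∀ l i, dg l i = n → pw e l i ∈ V)
    (h2 : ∀ l i, - dg l i = n → pw f l i ∈ V) : RS h n ≤ V := by
  have hle : (⊤ : Submodule ℚ L) ≤ (V ⊓ RS h n) ⊔ ⨆ m, ⨆ (_ : m ≠ n), RS h m := by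
    have aux : ∀ m (x : L), x ∈ RS h m → (m = n → x ∈ V) →
        x ∈ (V ⊓ RS h n) ⊔ ⨆ m, ⨆ (_ : m ≠ n), RS h m := by
      intro m x hx hV
      by_cases hm : m = n
      · subst hm; exact Submodule.mem_sup_left ⟨hV rfl, hx⟩
      · exact Submodule.mem_sup_right (Submodule.mem_iSup_of_mem m (Submodule.mem_iSup_of_mem hm hx))
    rw [← S.span_top]
    refine sup_le (sup_le ?_ ?_) ?_
    · rw [Submodule.span_le]; rintro _ ⟨a, rfl⟩
      exact aux 0 _ (S.h_mem a) (fun hm => h0 hm.symm a)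
    · rw [Submodule.span_le]; rintro _ ⟨a, rfl⟩
      exact aux _ _ (S.pw_mem a.1 a.2) (h1 a.1 a.2)
    · rw [Submodule.span_le]; rintro _ ⟨a, rfl⟩
      exact aux _ _ (S.nw_mem a.1 a.2) (h2 a.1 a.2)
  intro x hx
  obtain ⟨a, ha, b, hb, hab⟩ := Submodule.mem_sup.1 (hle (Submodule.mem_top (x := x)))
  have hb2 : b ∈ RS h n := by
    have : b = x - a := by rw [← hab]; abel
    rw [this]; exact Submodule.sub_mem _ hx ha.2
  have := (S.indep n).le_bot ⟨hb2, hb⟩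
  have hb0 : b = 0 := by simpa using this
  rw [← hab, hb0, add_zero]; exact ha.1

end KM
end E10P

set_option linter.unusedSectionVars false
namespace E10P
variable {L : Type*} [LieRing L] [LieAlgebra ℚ L]

/-- iterated bracket -/
def it (x : L) (n : ℕ) (y : L) : L := (fun z => ⁅x, z⁆)^[n] y

lemma it_zero (x y : L) : it x 0 y = y := rfl
lemma it_succ (x : L) (n) (y : L) : it x (n+1) y = ⁅x, it x n y⁆ :=
  Function.iterate_succ_apply' _ _ _
lemma it_sub (x : L) (n) (y z : L) (c : ℚ) : it x n (y - c • z) = it x n y - c • it x n z := by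
  induction n with
  | zero => rfl
  | succ n ih => rw [it_succ, ih, lie_sub, lie_smul, it_succ, it_succ]

lemma it_ad (x : L) (n) (y : L) : (LieAlgebra.ad ℚ L x ^ n) y = it x n y := by
  induction n with
  | zero => rfl
  | succ n ih => rw [pow_succ', Module.End.mul_apply, ih, it_succ]; rfl

lemma it_mem {h : Fin 10 → L} {n m q} {x y : L} (hx : x ∈ RS h n) (hy : y ∈ RS h m) (k : ℕ)
    (hq : (k : ℤ) • n + m = q) : it x k y ∈ RS h q := by
  subst hq
  induction k with
  | zero => simpa [it_zero] using hy
  | succ k ih => rw [it_succ]; exact lie_mem hx ih (by push_cast; rw [add_smul]; simp; abel)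

lemma sl2_basic {e f h u : L} {μ : ℚ} (hef : ⁅e, f⁆ = h) (hf : ⁅h, f⁆ = -((2 : ℚ) • f))
    (eu : ⁅e, u⁆ = 0) (hu : ⁅h, u⁆ = μ • u) (n : ℕ) :
    ⁅h, it f n u⁆ = (μ - 2 * n) • it f n u ∧
    ⁅e, it f (n+1) u⁆ = ((n + 1) * (μ - n) : ℚ) • it f n u := by
  have h1 : ∀ n : ℕ, ⁅h, it f n u⁆ = (μ - 2 * n) • it f n u := by
    intro n
    induction n with
    | zero => simpa [it_zero] using hu
    | succ n ih =>
      rw [it_succ, leibniz_lie, hf, ih, neg_lie, lie_smul, smul_lie]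
      push_cast
      module
  refine ⟨h1 n, ?_⟩
  induction n with
  | zero => rw [it_succ, it_zero, leibniz_lie, hef, eu, hu]; simp
  | succ n ih =>
    rw [it_succ, leibniz_lie, hef, ih, h1, lie_smul, ← it_succ]
    push_cast
    module

lemma sl2_ne {e f h u : L} {p : ℕ} (hef : ⁅e, f⁆ = h) (hf : ⁅h, f⁆ = -((2 : ℚ) • f))
    (eu : ⁅e, u⁆ = 0) (hu : ⁅h, u⁆ = (p : ℚ) • u) (u0 : u ≠ 0) (j : ℕ) (hj : j ≤ p) :
    it f j u ≠ 0 := by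
  induction j with
  | zero => exact u0
  | succ j ih =>
    intro h0
    have := (sl2_basic hef hf eu hu j).2
    rw [h0, lie_zero] at this
    have h3 := smul_eq_zero.1 this.symm
    rcases h3 with h3 | h3
    · rcases mul_eq_zero.1 h3 with h4 | h4
      · have : (0:ℚ) ≤ j := by positivity
        linarith
      · have : (p : ℚ) = j := by linarith
        have : p = j := by exact_mod_cast this
        omega
    · exact ih (by omega) h3

namespace KM

lemma dg_cons (k l i) : dg (k :: l) i = al k + dg l i := rfl

lemma al_nonneg (i j) : 0 ≤ al i j := by rw [al_apply]; split <;> simp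

lemma dg_nonneg (l i j) : 0 ≤ dg l i j := by
  induction l with
  | nil => exact al_nonneg i j
  | cons k l ih => rw [dg_cons]; have := al_nonneg k j; simp only [Pi.add_apply]; omega

lemma dg_pos (l i) : 0 < dg l i i := by
  induction l with
  | nil => simp [dg, al_apply]
  | cons k l ih => rw [dg_cons]; have := al_nonneg k i; simp only [Pi.add_apply]; omega

lemma RS_neg (h : Fin 10 → L) (n) : RS (fun i => - h i) n = RS h (-n) := by
  ext x
  simp only [mem_RS, neg_lie, wt_neg]
  refine forall_congr' fun i => ?_
  push_cast
  rw [neg_smul, neg_eq_iff_eq_neg]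

variable {e f h : Fin 10 → L} (S : KM e f h)
include S

lemma sgn {n} (hn : RS h n ≠ ⊥) : (∀ i, 0 ≤ n i) ∨ (∀ i, n i ≤ 0) := by
  by_contra! hc
  obtain ⟨⟨i, hi⟩, j, hj⟩ := hc
  refine hn (le_bot_iff.1 (S.RS_le n ⊥ ?_ ?_ ?_))
  · rintro rfl; simp at hi
  · rintro l k rfl
    have := dg_nonneg l k i; omega
  · rintro l k rfl
    have := dg_nonneg l k j
    simp at hj; omega

lemma pw_zero (l j i) (hk : ∀ k, k ≠ i → dg l j k = 0) : (l = [] ∧ j = i) ∨ pw e l j = 0 := by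
  have hj : j = i := by
    by_contra hji
    have := dg_pos l j; have := hk j hji; omega
  induction l with
  | nil => exact Or.inl ⟨rfl, hj⟩
  | cons a l ih =>
    right
    have ha : a = i := by
      by_contra hai
      have := hk a hai
      have h2 := dg_nonneg l j a
      rw [dg_cons] at this
      simp [al_apply] at this
      omega
    rcases ih (fun k hki => by
      have := hk k hki
      rw [dg_cons] at this
      simpa [al_apply, ha, hki] using this) with ⟨rfl, _⟩ | h0
    · change ⁅e a, e j⁆ = 0
      rw [ha, hj, lie_self]
    · change ⁅e a, pw e l j⁆ = 0
      rw [h0, lie_zero]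

lemma mult_al {n i} (hi : 0 < n i) (hk : ∀ k, k ≠ i → n k = 0) (hn : RS h n ≠ ⊥) : n = al i := by
  by_contra hni
  refine hn (le_bot_iff.1 (S.RS_le n ⊥ ?_ ?_ ?_))
  · rintro rfl; simp at hi
  · rintro l k rfl
    rcases S.pw_zero l k i hk with ⟨rfl, rfl⟩ | h0
    · exact absurd rfl hni
    · rw [h0]; exact Submodule.zero_mem _
  · rintro l k rfl
    have := dg_nonneg l k i
    simp at hi; omega

lemma RS_al (i) : RS h (al i) ≤ Submodule.span ℚ {e i} := by
  have hi : al i i = 1 := by simp [al_apply]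
  refine S.RS_le _ _ ?_ ?_ ?_
  · intro h0; rw [h0] at hi; simp at hi
  · intro l k hlk
    rcases S.pw_zero l k i (fun k hk => by rw [hlk]; simp [al_apply, hk]) with ⟨rfl, rfl⟩ | h0
    · exact Submodule.mem_span_singleton_self _
    · rw [h0]; exact Submodule.zero_mem _
  · intro l k hlk
    have := dg_nonneg l k i
    rw [← hlk] at hi
    simp at hi; omega

lemma nilp (i) (x : L) : ∃ n, it (e i) n x = 0 := by
  have : LieSubalgebra.engel ℚ (e i) = ⊤ := by
    apply S.gen
    · intro j
      rw [LieSubalgebra.mem_engel_iff]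
      exact ⟨2, by rw [it_ad]; exact S.se i j⟩
    · intro j
      rw [LieSubalgebra.mem_engel_iff]
      refine ⟨3, ?_⟩
      rw [it_ad]
      change ⁅e i, ⁅e i, ⁅e i, f j⁆⁆⁆ = 0
      by_cases hij : i = j
      · subst hij
        rw [S.ef, ← lie_skew (e i) (h i), S.he]
        simp
      · rw [S.ef0 i j hij]; simp
    · intro j
      rw [LieSubalgebra.mem_engel_iff]
      refine ⟨2, ?_⟩
      rw [it_ad]
      change ⁅e i, ⁅e i, h j⁆⁆ = 0
      rw [← lie_skew (e i) (h j), S.he]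
      simp
  have hx : x ∈ LieSubalgebra.engel ℚ (e i) := by rw [this]; trivial
  obtain ⟨n, hn⟩ := (LieSubalgebra.mem_engel_iff _ _ _).1 hx
  exact ⟨n, by rw [← it_ad]; exact hn⟩

lemma hf2 (i) : ⁅h i, f i⁆ = -((2 : ℚ) • f i) := by rw [S.hf, E10M_self]; norm_num

lemma refl_ne {n i} (hp : 0 ≤ wt i n) (hn : RS h n ≠ ⊥) : RS h (n - wt i n • al i) ≠ ⊥ := by
  obtain ⟨v, hv, v0⟩ := Submodule.exists_mem_ne_zero_of_ne_bot hn
  obtain ⟨p, hpp⟩ := Int.eq_ofNat_of_zero_le hp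
  classical
  have hex := S.nilp i v
  obtain ⟨j, hj⟩ : ∃ j, Nat.find hex = j + 1 := by
    refine Nat.exists_eq_succ_of_ne_zero fun h0 => ?_
    have := Nat.find_spec hex
    rw [h0] at this
    exact v0 this
  have h1 := Nat.find_spec hex
  rw [hj] at h1
  have h2 : it (e i) j v ≠ 0 := Nat.find_min hex (by omega)
  have h3 : it (e i) j v ∈ RS h ((j : ℤ) • al i + n) := it_mem (S.e_mem i) hv j rfl
  have h4 : ⁅h i, it (e i) j v⁆ = ((p + 2 * j : ℕ) : ℚ) • it (e i) j v := by
    rw [S.lie_h h3, wt_add, wt_smul, wt_al, E10M_self, hpp]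
    push_cast; congr 1; ring
  rw [it_succ] at h1
  have h5 := sl2_ne (S.ef i) (S.hf2 i) h1 h4 h2 (p + j) (by omega)
  intro hb
  have h6 : it (f i) (p + j) (it (e i) j v) ∈ RS h (n - wt i n • al i) :=
    it_mem (S.f_mem i) h3 (p + j) (by rw [hpp]; push_cast; simp only [add_smul, smul_neg, Int.ofNat_eq_natCast]; abel)
  rw [hb] at h6
  exact h5 (by simpa using h6)

lemma exists_pos {n} (h0 : ∀ i, 0 ≤ n i) (hp : 0 < ip n n) : ∃ i, 0 < n i ∧ 0 < wt i n := by
  obtain ⟨i, -, hi⟩ := Finset.exists_lt_of_sum_lt (s := Finset.univ) (f := fun _ => (0:ℤ))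
    (g := fun i => n i * wt i n) (by simpa [ip] using hp)
  refine ⟨i, ?_⟩
  have := h0 i
  constructor
  · rcases this.eq_or_lt with h | h
    · rw [← h] at hi; simp at hi
    · exact h
  · by_contra hc
    push Not at hc
    nlinarith

lemma ip_refl (n i) : ip (n - wt i n • al i) (n - wt i n • al i) = ip n n := by
  simp only [ip_sub_left, ip_sub_right, ip_smul_left, ip_smul_right, ip_al_left, ip_al_right, wt_sub, wt_smul, wt_al, E10M_self]
  ring

lemma refl_data {n} (h0 : ∀ i, 0 ≤ n i) (hp : 0 < ip n n) (hn : RS h n ≠ ⊥) :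
    ∃ i, 0 < wt i n ∧ (n = al i ∨ ((∀ k, 0 ≤ (n - wt i n • al i) k) ∧
      ∑ k, (n - wt i n • al i) k < ∑ k, n k)) := by
  obtain ⟨i, hi, hw⟩ := S.exists_pos h0 hp
  refine ⟨i, hw, ?_⟩
  by_cases hk : ∀ k, k ≠ i → n k = 0
  · exact Or.inl (S.mult_al hi hk hn)
  · right
    push Not at hk
    obtain ⟨k, hki, hk0⟩ := hk
    have hnk : 0 < n k := lt_of_le_of_ne (h0 k) (Ne.symm hk0)
    constructor
    · rcases S.sgn (S.refl_ne hw.le hn) with h1 | h1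
      · exact h1
      · have := h1 k
        simp [al_apply, hki] at this
        omega
    · simp [al_apply, Finset.sum_sub_distrib]
      exact hw

lemma norm_le_pos {n} (h0 : ∀ i, 0 ≤ n i) (hn : RS h n ≠ ⊥) : ip n n ≤ 2 := by
  obtain ⟨N, hN⟩ : ∃ N : ℕ, ∑ k, n k < N := ⟨(∑ k, n k).toNat + 1, by push_cast; have := Int.self_le_toNat (∑ k, n k); omega⟩
  induction N generalizing n with
  | zero =>
    have := Finset.sum_nonneg (s := Finset.univ) fun i _ => h0 i
    simp at hN; omega
  | succ N ih =>
    by_contra hc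
    obtain ⟨i, hw, h1 | ⟨h1, h2⟩⟩ := S.refl_data h0 (by omega) hn
    · apply hc; rw [h1, ip_al_left, wt_al, E10M_self]
    · have := ih h1 (S.refl_ne hw.le hn) (by push_cast at hN; omega)
      rw [S.ip_refl] at this
      exact hc this

lemma norm_le {n} (hn : RS h n ≠ ⊥) : ip n n ≤ 2 := by
  rcases S.sgn hn with h0 | h0
  · exact S.norm_le_pos h0 hn
  · have := (S.symm S.f1_ne).norm_le_pos (n := -n) (fun i => by simpa using h0 i)
      (by rw [RS_neg, neg_neg]; exact hn)
    simpa [ip_neg_left, ip_neg_right] using this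

lemma vanish {n} {x : L} (hx : x ∈ RS h n) (hn : 2 < ip n n) : x = 0 := by
  by_contra h0
  have := S.norm_le (n := n) (fun hb => by rw [hb] at hx; exact h0 (by simpa using hx))
  omega

lemma vanish_sgn {n} {x : L} (hx : x ∈ RS h n) (i j) (hi : n i < 0) (hj : 0 < n j) : x = 0 := by
  by_contra h0
  rcases S.sgn (n := n) (fun hb => by rw [hb] at hx; exact h0 (by simpa using hx)) with h | h
  · have := h i; omega
  · have := h j; omega

lemma dim1_pos {n} (h0 : ∀ i, 0 ≤ n i) (hp : ip n n = 2) {x y : L} (hx : x ∈ RS h n)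
    (hy : y ∈ RS h n) (x0 : x ≠ 0) : ∃ c : ℚ, y = c • x := by
  obtain ⟨N, hN⟩ : ∃ N : ℕ, ∑ k, n k < N := ⟨(∑ k, n k).toNat + 1, by push_cast; have := Int.self_le_toNat (∑ k, n k); omega⟩
  induction N generalizing n x y with
  | zero =>
    have := Finset.sum_nonneg (s := Finset.univ) fun i _ => h0 i
    simp at hN; omega
  | succ N ih =>
    have hn : RS h n ≠ ⊥ := fun hb => by rw [hb] at hx; exact x0 (by simpa using hx)
    obtain ⟨i, hw, h1 | ⟨h1, h2⟩⟩ := S.refl_data h0 (by omega) hn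
    · subst h1
      obtain ⟨a, rfl⟩ := Submodule.mem_span_singleton.1 (S.RS_al i hx)
      obtain ⟨b, rfl⟩ := Submodule.mem_span_singleton.1 (S.RS_al i hy)
      have ha : a ≠ 0 := by rintro rfl; simp at x0
      exact ⟨b / a, by rw [smul_smul, div_mul_cancel₀ _ ha]⟩
    · obtain ⟨p, hpp⟩ := Int.eq_ofNat_of_zero_le hw.le
      have key : ∀ z ∈ RS h n, z ≠ 0 → it (f i) p z ≠ 0 := by
        intro z hz z0
        refine sl2_ne (p := p) (S.ef i) (S.hf2 i) ?_ ?_ z0 p le_rfl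
        · refine S.vanish (lie_mem (S.e_mem i) hz rfl) ?_
          simp only [ip_add_left, ip_add_right, ip_al_left, ip_al_right, wt_add, wt_al, E10M_self]
          omega
        · rw [S.lie_h hz, hpp]; simp
      have hm : ∀ z ∈ RS h n, it (f i) p z ∈ RS h (n - wt i n • al i) := fun z hz =>
        it_mem (S.f_mem i) hz p (by rw [hpp]; simp; abel)
      obtain ⟨c, hc⟩ := ih h1 (by rw [S.ip_refl, hp]) (hm x hx) (hm y hy) (key x hx x0)
        (by push_cast at hN; omega)
      refine ⟨c, ?_⟩
      by_contra hne
      refine key (y - c • x) (Submodule.sub_mem _ hy (Submodule.smul_mem _ _ hx))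
        (sub_ne_zero.2 hne) ?_
      rw [it_sub, hc, sub_self]

end KM
end E10P

set_option linter.unusedSectionVars false
set_option linter.unusedSimpArgs false
namespace E10P
variable {L : Type*} [LieRing L] [LieAlgebra ℚ L]

/-- The highest root of `E8`. -/
def th : Fin 10 → ℤ := dl - al 1

lemma lie_comm3 {a b c : L} (hbc : ⁅b, c⁆ = 0) : ⁅⁅a, b⁆, c⁆ = ⁅⁅a, c⁆, b⁆ := by
  rw [lie_lie a b c, hbc, lie_zero, zero_sub, lie_skew]

/-- Pure Lie algebra lemma: the affine `sl2` relation. -/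
lemma affine_const (E W : ℕ → L) (hE : ∀ a b, ⁅E a, E b⁆ = 0) (hW : ∀ a b, ⁅W a, W b⁆ = 0)
    (HE : ∀ a, ⁅⁅E 0, W 0⁆, E a⁆ = (2 : ℚ) • E (a+1))
    (HW : ∀ a, ⁅⁅E 0, W 0⁆, W a⁆ = (-2 : ℚ) • W (a+1)) :
    ∀ k a b, a + b = k → ⁅E a, W b⁆ = ⁅E 0, W k⁆ := by
  intro k
  induction k using Nat.strong_induction_on with
  | _ k ih =>
  rcases Nat.eq_zero_or_pos k with rfl | hk
  · intro a b hab
    obtain ⟨rfl, rfl⟩ : a = 0 ∧ b = 0 := by omega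
    rfl
  have A1 : ∀ j a, ⁅⁅E 0, W j⁆, E a⁆ = - ⁅E 0, ⁅E a, W j⁆⁆ := by
    intro j a
    rw [lie_lie, hE, lie_zero, sub_zero, ← lie_skew (E a) (W j), lie_neg, neg_neg]
  have B1 : ∀ j a, a + j < k → ⁅⁅E 0, W j⁆, E a⁆ = (2 : ℚ) • E (a + j + 1) := by
    intro j a haj
    rw [A1, ih (a + j) haj a j rfl, ← ih (a + j) haj (a+j) 0 rfl, ← A1, HE]
  have B2 : ∀ j b, b + j < k → ⁅⁅E 0, W j⁆, W b⁆ = (-2 : ℚ) • W (b + j + 1) := by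
    intro j b hbj
    rw [← ih j (by omega) j 0 rfl, lie_comm3 (hW _ _), ih (j + b) (by omega) j b rfl,
      lie_comm3 (hW _ _), HW, add_comm j b]
  have C : ∀ a b c, a + b + c + 1 = k → ⁅⁅E 0, W c⁆, ⁅E 0, W (a + b)⁆⁆ =
      (2 : ℚ) • (⁅E (a + c + 1), W b⁆ - ⁅E a, W (b + c + 1)⁆) := by
    intro a b c habc
    rw [← ih (a + b) (by omega) a b rfl, leibniz_lie, B1 c a (by omega), B2 c b (by omega),
      smul_lie, lie_smul]
    module
  set g : L := ⁅⁅E 0, W 0⁆, ⁅E 0, W (k - 1)⁆⁆ with hg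
  have D : ∀ a, a + 1 ≤ k → (2 : ℚ) • (⁅E (a + 1), W (k - (a + 1))⁆ - ⁅E a, W (k - a)⁆) = g := by
    intro a ha
    have := C a (k - (a+1)) 0 (by omega)
    rw [show a + (k - (a+1)) = k - 1 by omega, show k - (a+1) + 0 + 1 = k - a by omega] at this
    rw [hg, this]
  have D2 : ∀ a, a ≤ k → (2 : ℚ) • (⁅E a, W (k - a)⁆ - ⁅E 0, W k⁆) = (a : ℚ) • g := by
    intro a
    induction a with
    | zero => intro _; simp
    | succ a iha =>
      intro ha
      have h1 := iha (by omega)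
      have h2 := D a ha
      push_cast
      rw [add_smul, one_smul, ← h1, ← h2]
      module
  have D3 : (2 : ℚ) • (⁅E k, W 0⁆ - ⁅E 0, W k⁆) = - g := by
    have := C 0 0 (k - 1) (by omega)
    rw [show 0 + (k - 1) + 1 = k by omega] at this
    rw [← this, hg, ← lie_skew]
  have g0 : g = 0 := by
    have := D2 k le_rfl
    rw [Nat.sub_self, D3] at this
    have h2 : ((k : ℚ) + 1) • g = 0 := by rw [add_smul, one_smul, ← this]; simp
    rcases smul_eq_zero.1 h2 with h3 | h3
    · have : (0:ℚ) ≤ k := by positivity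
      linarith
    · exact h3
  intro a b hab
  have := D2 a (by omega)
  rw [g0, smul_zero, show k - a = b by omega] at this
  rcases smul_eq_zero.1 this with h3 | h3
  · norm_num at h3
  · exact sub_eq_zero.1 h3

/-- Coroot combination. -/
def hv (h : Fin 10 → L) (n : Fin 10 → ℤ) : L := ∑ i, (n i : ℚ) • h i

lemma hv_add (h : Fin 10 → L) (n m) : hv h (n + m) = hv h n + hv h m := by
  simp [hv, add_smul, Finset.sum_add_distrib]

lemma hv_al (h : Fin 10 → L) (i) : hv h (al i) = h i := by
  simp [hv, al_apply]

lemma hv_lie {h : Fin 10 → L} {n m} {x : L} (hx : x ∈ RS h m) : ⁅hv h n, x⁆ = (ip n m : ℚ) • x := by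
  rw [mem_RS] at hx
  simp only [hv, sum_lie, smul_lie, hx, ip, smul_smul]
  push_cast
  rw [Finset.sum_smul]

namespace KM

/-- Check of a path of roots. -/
def okl : List (Fin 10) → Fin 10 → Bool
  | [], _ => true
  | k :: l, i => decide (wt k (dg l i) = -1) && okl l i

/-- path from a simple root to the highest root of `E8`. -/
def thp : List (Fin 10) := [2, 3, 4, 5, 6, 7, 8, 9, 6, 5, 4, 3, 2, 7, 6, 5, 4, 3, 9, 6, 5, 4, 7, 6, 5, 8, 7, 6]

lemma thp_ok : okl thp 9 = true := by decide +kernel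
lemma thp_dg : dg thp 9 = th := by decide +kernel

variable {e f h : Fin 10 → L} (S : KM e f h)
include S

lemma root_path (l i) (hl : okl l i = true) : ip (dg l i) (dg l i) = 2 ∧
    ∃ x ∈ RS h (dg l i), ∃ y ∈ RS h (-dg l i), ⁅x, y⁆ = hv h (dg l i) := by
  induction l with
  | nil =>
    refine ⟨by simp [dg, ip_al_left, wt_al, E10M_self], e i, S.e_mem i, f i, S.f_mem i, ?_⟩
    rw [S.ef]; exact (hv_al h i).symm
  | cons k l ih =>
    simp only [okl, Bool.and_eq_true, decide_eq_true_eq] at hl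
    obtain ⟨h1, x, hx, y, hy, hxy⟩ := ih hl.2
    have hw := hl.1
    rw [dg_cons]
    generalize dg l i = β at *
    refine ⟨?_, ⁅e k, x⁆, lie_mem (S.e_mem k) hx rfl, -⁅f k, y⁆,
      Submodule.neg_mem _ (lie_mem (S.f_mem k) hy (by abel)), ?_⟩
    · simp only [ip_add_left, ip_add_right, ip_al_left, ip_al_right, wt_add, wt_al, E10M_self]
      omega
    have z1 : ⁅e k, y⁆ = 0 := by
      refine S.vanish (lie_mem (S.e_mem k) hy rfl) ?_
      simp only [ip_add_left, ip_add_right, ip_neg_left, ip_neg_right, ip_al_left, ip_al_right, wt_add, wt_neg, wt_al, E10M_self]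
      omega
    have z2 : ⁅x, f k⁆ = 0 := by
      refine S.vanish (lie_mem hx (S.f_mem k) rfl) ?_
      simp only [ip_add_left, ip_add_right, ip_neg_left, ip_neg_right, ip_al_left, ip_al_right, wt_add, wt_neg, wt_al, E10M_self]
      omega
    have z3 : ⁅x, ⁅f k, y⁆⁆ = - f k := by
      rw [leibniz_lie, z2, zero_lie, hxy, zero_add, ← lie_skew, hv_lie (S.f_mem k), ip_neg_right, ip_al_right, hw]
      simp
    have z4 : ⁅e k, ⁅f k, y⁆⁆ = y := by
      rw [leibniz_lie, z1, lie_zero, S.ef, S.lie_h hy, wt_neg, hw]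
      simp
    rw [lie_neg, lie_lie, z3, z4, lie_neg, S.ef, hxy, hv_add, hv_al]
    abel

lemma th_ex : ∃ x ∈ RS h th, ∃ y ∈ RS h (-th), ⁅x, y⁆ = hv h th := by
  have := (S.root_path thp 9 thp_ok).2
  rwa [thp_dg] at this

lemma affine (m : ℕ) : ∃ x ∈ RS h (((m : ℤ) + 1) • dl - al 1), x ≠ 0 ∧
    ∃ u ∈ RS h ((m : ℤ) • dl + al 1), ∃ v ∈ RS h th, ⁅e 1, x⁆ = ⁅u, v⁆ := by
  obtain ⟨w, hw, w', hw', hww⟩ := S.th_ex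
  set H := ⁅e 1, w⁆ with hH
  have Hm : H ∈ RS h dl := lie_mem (S.e_mem 1) hw (by simp [th])
  have dl1 : dl 1 = 1 := rfl
  have w1 : wt 1 dl = 0 := by rw [wt_dl]; rfl
  have a10 : al 1 0 = 0 := rfl
  let E : ℕ → L := fun n => ((1/2 : ℚ)^n) • it H n (e 1)
  let W : ℕ → L := fun n => ((-1/2 : ℚ)^n) • it H n w
  have Em : ∀ n : ℕ, E n ∈ RS h ((n : ℤ) • dl + al 1) := fun n =>
    Submodule.smul_mem _ _ (it_mem Hm (S.e_mem 1) n rfl)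
  have Wm : ∀ n : ℕ, W n ∈ RS h (((n : ℤ) + 1) • dl - al 1) := fun n =>
    Submodule.smul_mem _ _ (it_mem Hm hw n (by rw [add_smul, one_smul, th]; abel))
  have E0 : E 0 = e 1 := by simp [E, it_zero]
  have W0 : W 0 = w := by simp [W, it_zero]
  have HE : ∀ a, ⁅⁅E 0, W 0⁆, E a⁆ = (2 : ℚ) • E (a+1) := by
    intro a
    rw [E0, W0, ← hH]
    simp only [E, it_succ, lie_smul, smul_smul, pow_succ]
    congr 1; ring
  have HW : ∀ a, ⁅⁅E 0, W 0⁆, W a⁆ = (-2 : ℚ) • W (a+1) := by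
    intro a
    rw [E0, W0, ← hH]
    simp only [W, it_succ, lie_smul, smul_smul, pow_succ]
    congr 1; ring
  have EE : ∀ a b, ⁅E a, E b⁆ = 0 := by
    intro a b
    refine S.vanish (lie_mem (Em a) (Em b) rfl) ?_
    simp only [Pi.add_apply, Pi.smul_apply, ip_add_left, ip_add_right, ip_smul_left, ip_smul_right, ip_al_left, ip_al_right, wt_add, wt_smul, wt_al, E10M_self, ip_dl_left, ip_dl_right, w1, a10, dl_zero]
    norm_num [dl_zero, a10]
  have WW : ∀ a b, ⁅W a, W b⁆ = 0 := by
    intro a b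
    refine S.vanish (lie_mem (Wm a) (Wm b) rfl) ?_
    simp [-zsmul_eq_mul, ip_add_left, ip_add_right, ip_sub_left, ip_sub_right, ip_smul_left, ip_smul_right, ip_al_left, ip_al_right, wt_sub, wt_add, wt_smul, wt_al, E10M_self, ip_dl_left, ip_dl_right, w1, a10, dl_zero]
  have ipth : ip th th = 2 := by
    simp [th, ip_sub_left, ip_sub_right, ip_al_left, ip_al_right, wt_sub, wt_al, E10M_self, ip_dl_left, ip_dl_right, w1, a10, dl_zero]
  have wth : wt 1 th = -2 := by simp [th, wt_sub, wt_al, E10M_self, w1]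
  set H' := ⁅w', f 1⁆ with hH'
  have z1 : ⁅f 1, w⁆ = 0 := by
    refine S.vanish (lie_mem (S.f_mem 1) hw rfl) ?_
    simp [-zsmul_eq_mul, ip_add_left, ip_add_right, ip_neg_left, ip_neg_right, ip_al_left, ip_al_right, wt_add, wt_neg, wt_al, E10M_self, ipth, wth]
  have z2 : ⁅w', e 1⁆ = 0 := by
    refine S.vanish (lie_mem hw' (S.e_mem 1) rfl) ?_
    simp [-zsmul_eq_mul, ip_add_left, ip_add_right, ip_neg_left, ip_neg_right, ip_al_left, ip_al_right, wt_add, wt_neg, wt_al, E10M_self, ipth, wth]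
  have hw'w : ⁅w', w⁆ = - hv h th := by rw [← lie_skew, hww]
  have q1 : ⁅H', w⁆ = (-2 : ℚ) • f 1 := by
    rw [hH', lie_lie, z1, hw'w, lie_neg, ← lie_skew (f 1), hv_lie (S.f_mem 1), ip_neg_right,
      ip_al_right, wth]
    simp
  have q2 : ⁅H', e 1⁆ = (2 : ℚ) • w' := by
    rw [hH', lie_lie, z2, lie_zero, sub_zero, ← lie_skew (f 1), S.ef, lie_neg, lie_skew,
      S.lie_h hw', wt_neg, wth]
    simp
  have q3 : ⁅H', H⁆ = (-2 : ℚ) • hv h dl := by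
    have : dl = th + al 1 := by simp [th]
    rw [hH, leibniz_lie, q1, q2, smul_lie, lie_smul, hw'w, S.ef, this, hv_add, hv_al]
    module
  have q4 : ⁅H, f 1⁆ = (-2 : ℚ) • w := by
    rw [hH, lie_lie, ← lie_skew w (f 1), z1, S.ef, ← lie_skew w, S.lie_h hw, wth]
    simp
  have q5 : ∀ n, ⁅⁅H', H⁆, W n⁆ = 0 := by
    intro n
    rw [q3, smul_lie, hv_lie (Wm n), ip_dl_left]
    simp [dl_zero, a10]
  have Wsucc : ∀ n, W (n+1) = (-1/2 : ℚ) • ⁅H, W n⁆ := by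
    intro n
    simp only [W, it_succ, lie_smul, smul_smul, pow_succ]
    congr 1; ring
  have q6 : ∀ n, ⁅H', W (n+1)⁆ = (-2 : ℚ) • W n := by
    intro n
    induction n with
    | zero =>
      rw [Wsucc, lie_smul, leibniz_lie, q5, W0, q1, lie_smul, q4]
      module
    | succ n ih =>
      rw [Wsucc (n+1), lie_smul, leibniz_lie, q5, ih, lie_smul, Wsucc n]
      module
  have Wne : ∀ n, W n ≠ 0 := by
    intro n
    induction n with
    | zero =>
      rw [W0]
      rintro rfl
      rw [zero_lie] at hww
      have := hv_lie (n := th) (S.e_mem 1)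
      rw [← hww, zero_lie, ip_al_right, wth] at this
      exact S.ne (by simpa using this.symm)
    | succ n ih =>
      intro h0
      have := q6 n
      rw [h0, lie_zero] at this
      exact ih (by simpa using this.symm)
  refine ⟨W m, Wm m, Wne m, E m, Em m, w, hw, ?_⟩
  have := affine_const E W EE WW HE HW m m 0 (by simp)
  rw [← E0, ← this, W0]

end KM
end E10P

set_option linter.unusedSectionVars false
set_option linter.unusedSimpArgs false
namespace E10P
variable {L : Type*} [LieRing L] [LieAlgebra ℚ L]

lemma ip_shift (M : ℤ) (β) (hβ : β 0 = 0) : ip (M • dl + β) (M • dl + β) = ip β β := by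
  simp only [ip_add_left, ip_add_right, ip_smul_left, ip_smul_right, ip_dl_left, ip_dl_right, hβ,
    dl_zero, Pi.add_apply, Pi.smul_apply]
  simp

lemma wt_shift (M : ℤ) (β) (i) (hi : i ≠ 0) : wt i (M • dl + β) = wt i β := by
  rw [wt_add, wt_smul, wt_dl, if_neg hi]; simp

lemma al0 {i : Fin 10} (hi : i ≠ 0) : al i 0 = 0 := by rw [al_apply, if_neg (Ne.symm hi)]

lemma dl_pos : ∀ i : Fin 10, i ≠ 0 → 1 ≤ dl i := by decide

lemma dl_nonneg : ∀ i : Fin 10, 0 ≤ dl i := by decide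

/-- The nodes of `E8`. -/
def nd : Fin 8 → Fin 10 := ![2,3,4,5,6,7,8,9]

lemma nd_ne0 : ∀ i, nd i ≠ 0 := by decide
lemma nd_ne1 : ∀ i, nd i ≠ 1 := by decide
lemma nd_surj : ∀ j : Fin 10, j ≠ 0 → j ≠ 1 → ∃ i, nd i = j := by decide

lemma edge_list (i j : Fin 10) (hi : i ≠ 0) (hj : j ≠ 0) (hij : E10M i j = -1) :
    (i, j) ∈ [((1 : Fin 10), (2 : Fin 10)), (2,3), (3,4), (4,5), (5,6), (6,7), (7,8), (6,9),
        (2,1), (3,2), (4,3), (5,4), (6,5), (7,6), (8,7), (9,6)] := by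
  have key : ∀ i j : Fin 10, (decide (i = 0) || decide (j = 0) || !decide ((E10M i j : ℤ) = -1) ||
      decide ((i, j) ∈ [((1 : Fin 10), (2 : Fin 10)), (2,3), (3,4), (4,5), (5,6), (6,7), (7,8), (6,9),
        (2,1), (3,2), (4,3), (5,4), (6,5), (7,6), (8,7), (9,6)])) = true := by
    decide +kernel
  have := key i j
  simp only [hi, hj, hij, decide_false, decide_true, Bool.false_or, Bool.not_true,
    decide_eq_true_eq] at this
  exact this

namespace KM
variable {e f h : Fin 10 → L} (S : KM e f h)
include S

lemma vanishK (M : ℤ) {β} {x : L} (hx : x ∈ RS h (M • dl + β)) (hβ : β 0 = 0) (hn : 2 < ip β β) :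
    x = 0 := S.vanish hx (by rwa [ip_shift M β hβ])

lemma feh {n} {x : L} (p) (hx : x ∈ RS h n) :
    ⁅f p, ⁅e p, x⁆⁆ = -((wt p n : ℚ) • x) + ⁅e p, ⁅f p, x⁆⁆ := by
  rw [leibniz_lie (f p), ← lie_skew (f p) (e p), S.ef, neg_lie, S.lie_h hx]

lemma fe {j p} (hjp : j ≠ p) (x : L) : ⁅f j, ⁅e p, x⁆⁆ = ⁅e p, ⁅f j, x⁆⁆ := by
  rw [leibniz_lie (f j), ← lie_skew (f j) (e p), S.ef0 p j hjp.symm]; simp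

lemma adj (M : ℤ) {p j} (hp : p ≠ 0) (hj : j ≠ 0) (hpj : E10M p j = -1) {x : L}
    (hx : x ∈ RS h (M • dl + -al p)) (x0 : x ≠ 0) :
    ∃ x' ∈ RS h (M • dl + -al j), x' ≠ 0 ∧ ⁅f j, ⁅e p, x⁆⁆ = -x' ∧ ⁅f p, ⁅e j, x'⁆⁆ = -x := by
  have hne : j ≠ p := by rintro rfl; rw [E10M_self] at hpj; norm_num at hpj
  have hjp : E10M j p = -1 := by rw [E10M_symm, hpj]
  have hu : ⁅f j, x⁆ ∈ RS h (M • dl + (-al p - al j)) := lie_mem (S.f_mem j) hx (by abel)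
  have ex : ⁅e j, x⁆ = 0 := by
    refine S.vanishK M (β := -al p + al j) (lie_mem (S.e_mem j) hx (by abel)) ?_ ?_
    · simp [al0 hp, al0 hj]
    · simp [ip_add_left, ip_add_right, ip_neg_left, ip_neg_right, ip_al_left, ip_al_right, wt_add,
        wt_neg, wt_al, E10M_self, hpj, hjp]
  have eu : ⁅e j, ⁅f j, x⁆⁆ = x := by
    rw [leibniz_lie (e j), ex, lie_zero, add_zero, S.ef, S.lie_h hx, wt_shift _ _ _ hj, wt_neg,
      wt_al, hjp]
    simp
  have u0 : ⁅f j, x⁆ ≠ 0 := by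
    intro h0; rw [h0, lie_zero] at eu; exact x0 eu.symm
  have fu : ⁅f p, ⁅f j, x⁆⁆ = 0 := by
    refine S.vanishK M (β := -al p - al j - al p) (lie_mem (S.f_mem p) hu (by abel)) ?_ ?_
    · simp [al0 hp, al0 hj]
    · simp [ip_add_left, ip_add_right, ip_sub_left, ip_sub_right, ip_neg_left, ip_neg_right,
        ip_al_left, ip_al_right, wt_add, wt_sub, wt_neg, wt_al, E10M_self, hpj, hjp]
  have feu : ⁅f p, ⁅e p, ⁅f j, x⁆⁆⁆ = ⁅f j, x⁆ := by
    rw [S.feh p hu, fu, lie_zero, wt_shift _ _ _ hp]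
    simp [wt_sub, wt_neg, wt_al, E10M_self, hpj]
  refine ⟨-⁅e p, ⁅f j, x⁆⁆, Submodule.neg_mem _ (lie_mem (S.e_mem p) hu (by abel)), ?_, ?_, ?_⟩
  · intro h0
    rw [neg_eq_zero] at h0
    rw [h0, lie_zero] at feu
    exact u0 feu.symm
  · rw [neg_neg, S.fe hne]
  · rw [S.fe hne.symm, lie_neg, feu, lie_neg, eu]

lemma diag (M : ℤ) {i} (hi : i ≠ 0) {x : L} (hx : x ∈ RS h (M • dl + -al i)) :
    ⁅f i, ⁅e i, x⁆⁆ = (2 : ℚ) • x := by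
  have fx : ⁅f i, x⁆ = 0 := by
    refine S.vanishK M (β := -al i - al i) (lie_mem (S.f_mem i) hx (by abel)) ?_ ?_
    · simp [al0 hi]
    · simp [ip_sub_left, ip_sub_right, ip_neg_left, ip_neg_right,
        ip_al_left, ip_al_right, wt_sub, wt_neg, wt_al, E10M_self]
  rw [S.feh i hx, fx, lie_zero, wt_shift _ _ _ hi, wt_neg, wt_al, E10M_self]
  push_cast; module

lemma orth (M : ℤ) {i j} (hi : i ≠ 0) (hj : j ≠ 0) (hij : E10M i j = 0) {x : L}
    (hx : x ∈ RS h (M • dl + -al i)) : ⁅f j, ⁅e i, x⁆⁆ = 0 := by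
  have hne : j ≠ i := by rintro rfl; rw [E10M_self] at hij; norm_num at hij
  have hji : E10M j i = 0 := by rw [E10M_symm, hij]
  have fx : ⁅f j, x⁆ = 0 := by
    refine S.vanishK M (β := -al i - al j) (lie_mem (S.f_mem j) hx (by abel)) ?_ ?_
    · simp [al0 hi, al0 hj]
    · simp [ip_sub_left, ip_sub_right, ip_neg_left, ip_neg_right,
        ip_al_left, ip_al_right, wt_sub, wt_neg, wt_al, E10M_self, hij, hji]
  rw [S.fe hne, fx, lie_zero]

lemma tree (M : ℤ) {x1 : L} (hx : x1 ∈ RS h (M • dl + -al 1)) (x0 : x1 ≠ 0) :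
    ∃ x : Fin 10 → L, x 1 = x1 ∧ (∀ i, i ≠ 0 → x i ∈ RS h (M • dl + -al i) ∧ x i ≠ 0) ∧
      ∀ i j, i ≠ 0 → j ≠ 0 → ⁅f j, ⁅e i, x i⁆⁆ = (E10M i j : ℚ) • x j := by
  obtain ⟨x2, m2, n2, a12, a21⟩ := S.adj M (p := 1) (j := 2) (by decide) (by decide) (by decide) hx x0
  obtain ⟨x3, m3, n3, a23, a32⟩ := S.adj M (p := 2) (j := 3) (by decide) (by decide) (by decide) m2 n2
  obtain ⟨x4, m4, n4, a34, a43⟩ := S.adj M (p := 3) (j := 4) (by decide) (by decide) (by decide) m3 n3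
  obtain ⟨x5, m5, n5, a45, a54⟩ := S.adj M (p := 4) (j := 5) (by decide) (by decide) (by decide) m4 n4
  obtain ⟨x6, m6, n6, a56, a65⟩ := S.adj M (p := 5) (j := 6) (by decide) (by decide) (by decide) m5 n5
  obtain ⟨x7, m7, n7, a67, a76⟩ := S.adj M (p := 6) (j := 7) (by decide) (by decide) (by decide) m6 n6
  obtain ⟨x8, m8, n8, a78, a87⟩ := S.adj M (p := 7) (j := 8) (by decide) (by decide) (by decide) m7 n7
  obtain ⟨x9, m9, n9, a69, a96⟩ := S.adj M (p := 6) (j := 9) (by decide) (by decide) (by decide) m6 n6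
  let x : Fin 10 → L := ![0, x1, x2, x3, x4, x5, x6, x7, x8, x9]
  have hm : ∀ i, i ≠ 0 → x i ∈ RS h (M • dl + -al i) ∧ x i ≠ 0 := by
    intro i hi
    fin_cases i
    · exact absurd rfl hi
    · exact ⟨hx, x0⟩
    · exact ⟨m2, n2⟩
    · exact ⟨m3, n3⟩
    · exact ⟨m4, n4⟩
    · exact ⟨m5, n5⟩
    · exact ⟨m6, n6⟩
    · exact ⟨m7, n7⟩
    · exact ⟨m8, n8⟩
    · exact ⟨m9, n9⟩
  refine ⟨x, rfl, hm, ?_⟩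
  intro i j hi hj
  by_cases hij : i = j
  · subst hij
    rw [S.diag M hi (hm i hi).1, E10M_self]; norm_num
  rcases E10M_off i j hij with h0 | h1
  · rw [S.orth M hi hj h0 (hm i hi).1, h0]; simp
  · have edge : (i, j) ∈ [((1 : Fin 10), (2 : Fin 10)), (2,3), (3,4), (4,5), (5,6), (6,7), (7,8), (6,9),
        (2,1), (3,2), (4,3), (5,4), (6,5), (7,6), (8,7), (9,6)] := by
      exact edge_list i j hi hj h1
    have red : ∀ a : L, ((-1 : ℤ) : ℚ) • a = - a := fun a => by simp
    rw [h1, red]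
    simp only [List.mem_cons, Prod.mk.injEq, List.not_mem_nil, or_false] at edge
    rcases edge with ⟨rfl, rfl⟩ | ⟨rfl, rfl⟩ | ⟨rfl, rfl⟩ | ⟨rfl, rfl⟩ | ⟨rfl, rfl⟩ | ⟨rfl, rfl⟩ |
      ⟨rfl, rfl⟩ | ⟨rfl, rfl⟩ | ⟨rfl, rfl⟩ | ⟨rfl, rfl⟩ | ⟨rfl, rfl⟩ | ⟨rfl, rfl⟩ | ⟨rfl, rfl⟩ |
      ⟨rfl, rfl⟩ | ⟨rfl, rfl⟩ | ⟨rfl, rfl⟩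
    · exact a12
    · exact a23
    · exact a34
    · exact a45
    · exact a56
    · exact a67
    · exact a78
    · exact a69
    · exact a21
    · exact a32
    · exact a43
    · exact a54
    · exact a65
    · exact a76
    · exact a87
    · exact a96

lemma word_T (n : Fin 10 → ℤ) (T : Submodule ℚ L)
    (hT : ∀ i, i ≠ 0 → i ≠ 1 → ∀ z ∈ RS h (n + -al i), ⁅e i, z⁆ ∈ T) (l i) :
    dg l i 0 = 0 → dg l i 1 = 0 → ∀ u ∈ RS h (n - dg l i), ⁅pw e l i, u⁆ ∈ T := by
  induction l with
  | nil =>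
    intro h0 h1 u hu
    refine hT i ?_ ?_ u ?_
    · rintro rfl; simp [dg, al_apply] at h0
    · rintro rfl; simp [dg, al_apply] at h1
    · rwa [← sub_eq_add_neg]
  | cons j l ih =>
    intro h0 h1 u hu
    rw [dg_cons] at h0 h1 hu
    have d0 := dg_nonneg l i 0
    have d1 := dg_nonneg l i 1
    have e0 := al_nonneg j 0
    have e1 := al_nonneg j 1
    simp only [Pi.add_apply] at h0 h1
    have j0 : j ≠ 0 := by rintro rfl; simp [al_apply] at h0; omega
    have j1 : j ≠ 1 := by rintro rfl; simp [al_apply] at h1; omega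
    change ⁅⁅e j, pw e l i⁆, u⁆ ∈ T
    rw [lie_lie]
    refine T.sub_mem (hT j j0 j1 _ (lie_mem (S.pw_mem l i) hu (by abel))) ?_
    exact ih (by omega) (by omega) _ (lie_mem (S.e_mem j) hu (by abel))

lemma final (m : ℕ) : Module.finrank ℚ (RS h (((m : ℤ) + 1) • dl)) = 8 := by
  obtain ⟨x1, hx1, x10, u, hu, v, hv, huv⟩ := S.affine m
  rw [sub_eq_add_neg] at hx1
  obtain ⟨x, hxx, hx, hfe⟩ := S.tree _ hx1 x10
  set M : ℤ := (m : ℤ) + 1 with hM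
  have Mpos : 0 < M := by omega
  let y : Fin 8 → L := fun i => ⁅e (nd i), x (nd i)⁆
  have mone : ∀ i, i ≠ 0 → ∀ z ∈ RS h (M • dl + -al i), ∃ c : ℚ, z = c • x i := by
    intro i hi z hz
    refine S.dim1_pos ?_ ?_ (hx i hi).1 hz (hx i hi).2
    · intro k
      simp only [Pi.add_apply, Pi.neg_apply, Pi.smul_apply, smul_eq_mul, al_apply]
      split
      · next hk => subst hk; have := dl_pos k hi; nlinarith
      · have := dl_nonneg k; nlinarith
    · rw [ip_shift _ _ (by simp [al0 hi])]
      simp [ip_neg_left, ip_neg_right, ip_al_left, wt_al, E10M_self]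
  set T : Submodule ℚ L := Submodule.span ℚ (Set.range y) with hT
  have T2 : ∀ i, i ≠ 0 → i ≠ 1 → ∀ z ∈ RS h (M • dl + -al i), ⁅e i, z⁆ ∈ T := by
    intro i h0 h1 z hz
    obtain ⟨c, rfl⟩ := mone i h0 z hz
    obtain ⟨a, rfl⟩ := nd_surj i h0 h1
    rw [lie_smul]
    exact T.smul_mem _ (Submodule.subset_span ⟨a, rfl⟩)
  have Tuv : ⁅v, u⁆ ∈ T := by
    have : RS h th ≤ T.comap ((LieAlgebra.ad ℚ L (-u) : L →ₗ[ℚ] L)) := by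
      refine S.RS_le _ _ ?_ ?_ ?_
      · intro h0
        exact absurd (congrFun h0 2) (by decide)
      · intro l i hl
        change ⁅-u, pw e l i⁆ ∈ T
        rw [neg_lie, lie_skew]
        refine S.word_T (M • dl) T T2 l i (by rw [hl]; decide) (by rw [hl]; decide) u ?_
        rw [hl]
        convert hu using 2
        rw [hM, add_smul, one_smul, th]; abel
      · intro l i hl
        have h1 := dg_nonneg l i 2
        have h2 := congrFun hl 2
        have h3 : th 2 = 2 := by decide
        simp only [Pi.neg_apply] at h2
        omega
    have h2 := this hv
    change ⁅-u, v⁆ ∈ T at h2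
    rwa [neg_lie, lie_skew] at h2
  have T1 : ∀ z ∈ RS h (M • dl + -al 1), ⁅e 1, z⁆ ∈ T := by
    intro z hz
    obtain ⟨c, rfl⟩ := mone 1 (by decide) z hz
    rw [lie_smul, hxx, huv, ← lie_skew]
    exact T.smul_mem _ (T.neg_mem Tuv)
  have K1 : (M • dl) 1 = M := by simp [dl]
  have K2 : (M • dl) 2 = M * 2 := by simp [dl]
  have hle : RS h (M • dl) ≤ T := by
    refine S.RS_le _ _ ?_ ?_ ?_
    · intro h0; rw [h0] at K1; simp at K1; omega
    · intro l i hl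
      cases l with
      | nil =>
        exfalso
        rw [← hl] at K1 K2
        simp only [dg, List.foldr, al_apply] at K1 K2
        split at K1 <;> split at K2 <;> omega
      | cons j l =>
        change ⁅e j, pw e l i⁆ ∈ T
        rw [dg_cons] at hl
        have hm := S.pw_mem l i
        have hd : dg l i = M • dl + -al j := by rw [← hl]; abel
        by_cases j0 : j = 0
        · subst j0
          have h2 := congrFun hd 0
          have h3 := dg_nonneg l i 0
          simp [al_apply, dl_zero] at h2
          omega
        rw [hd] at hm
        by_cases j1 : j = 1
        · subst j1; exact T1 _ hm
        · exact T2 j j0 j1 _ hm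
    · intro l i hl
      have h1 := dg_nonneg l i 1
      rw [← hl] at K1
      simp only [Pi.neg_apply] at K1
      omega
  have hge : T ≤ RS h (M • dl) := by
    rw [hT, Submodule.span_le]
    rintro _ ⟨i, rfl⟩
    exact lie_mem (S.e_mem _) (hx _ (nd_ne0 i)).1 (by abel)
  have hli : LinearIndependent ℚ y := by
    rw [Fintype.linearIndependent_iff]
    intro c hc
    have key : ∀ j, ∑ i, c i * (E10M (nd i) (nd j) : ℚ) = 0 := by
      intro j
      have h1 : ⁅f (nd j), ∑ i, c i • y i⁆ = 0 := by rw [hc, lie_zero]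
      have h2 : (∑ i, c i * (E10M (nd i) (nd j) : ℚ)) • x (nd j) = 0 := by
        rw [← h1, lie_sum, Finset.sum_smul]
        refine Finset.sum_congr rfl fun i _ => ?_
        rw [lie_smul, hfe _ _ (nd_ne0 i) (nd_ne0 j), smul_smul]
      rcases smul_eq_zero.1 h2 with h3 | h3
      · exact h3
      · exact absurd h3 (hx _ (nd_ne0 j)).2
    have k0 := key 0
    have k1 := key 1
    have k2 := key 2
    have k3 := key 3
    have k4 := key 4
    have k5 := key 5
    have k6 := key 6
    have k7 := key 7
    simp [Fin.sum_univ_succ, E10M, nd] at k0 k1 k2 k3 k4 k5 k6 k7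
    intro i
    fin_cases i <;> simp <;> linarith
  rw [← le_antisymm hge hle, hT, finrank_span_eq_card hli]
  simp

end KM
end E10P

set_option linter.unusedSectionVars false
set_option linter.unusedSimpArgs false
namespace E10P

/-- Serre element -/
def Srr {A : Type*} [LieRing A] (b : Fin 10 → A) (i j : Fin 10) : A :=
  if E10M i j = -1 then ⁅b i, ⁅b i, b j⁆⁆ else ⁅b i, b j⁆

lemma Srr_eq {A : Type*} [LieRing A] [LieAlgebra ℚ A] (b : Fin 10 → A) (i j : Fin 10) :
    (LieAlgebra.ad ℚ A (b i) ^ (-E10M i j).toNat) ⁅b i, b j⁆ = Srr b i j := by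
  by_cases hij : i = j
  · subst hij; simp [Srr, E10M_self]
  rcases E10M_off i j hij with h | h
  · simp [Srr, h]
  · simp [Srr, h]

lemma Srr_comm {A : Type*} [LieRing A] [LieAlgebra ℚ A] (a b c : Fin 10 → A)
    (h1 : ∀ i, ⁅a i, b i⁆ = c i) (h2 : ∀ i j, i ≠ j → ⁅a i, b j⁆ = 0)
    (h3 : ∀ i j, ⁅c i, b j⁆ = -((E10M i j : ℚ) • b j)) (k i j) : ⁅a k, Srr b i j⁆ = 0 := by
  have h4 : ∀ i j, ⁅b j, c i⁆ = (E10M i j : ℚ) • b j := fun i j => by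
    rw [← lie_skew, h3, neg_neg]
  by_cases hij : i = j
  · subst hij; simp [Srr, E10M_self]
  rcases E10M_off i j hij with h | h
  · have h' : E10M j i = 0 := by rw [E10M_symm, h]
    simp only [Srr, h]
    rw [if_neg (by norm_num), leibniz_lie]
    by_cases hki : k = i
    · subst hki
      rw [h1, h2 k j hij, h3, h]; simp
    · by_cases hkj : k = j
      · subst hkj
        rw [h1, h2 k i hki, h4, h']; simp
      · rw [h2 k j hkj, h2 k i hki]; simp
  · have h' : E10M j i = -1 := by rw [E10M_symm, h]
    simp only [Srr, h, if_true]
    rw [leibniz_lie, leibniz_lie (a k) (b i) (b j)]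
    by_cases hki : k = i
    · subst hki
      rw [h1, h2 k j hij, leibniz_lie (c k)]
      simp only [h3, h, E10M_self, lie_neg, lie_smul, neg_lie, smul_lie, lie_zero, lie_add, add_zero]
      push_cast; module
    · by_cases hkj : k = j
      · subst hkj
        rw [h1, h2 k i hki, h4, h']; simp
      · rw [h2 k j hkj, h2 k i hki]; simp

/-- the word module -/
abbrev WM : Type := List (Fin 10) →₀ ℚ

/-- commutator bracket -/
instance endWM : LieRing (Module.End ℚ WM) := LieRing.ofAssociativeRing

lemma end_lie_smul (c : ℚ) (x y : Module.End ℚ WM) : ⁅x, c • y⁆ = c • ⁅x, y⁆ := by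
  simp only [Ring.lie_def, mul_smul_comm, smul_mul_assoc, smul_sub]

lemma end_smul_lie (c : ℚ) (x y : Module.End ℚ WM) : ⁅c • x, y⁆ = c • ⁅x, y⁆ := by
  simp only [Ring.lie_def, mul_smul_comm, smul_mul_assoc, smul_sub]

/-- raising operators -/
def oe (i : Fin 10) : Module.End ℚ WM := Finsupp.lmapDomain ℚ ℚ (List.cons i)

/-- weights of words -/
def ww (k : Fin 10) (w : List (Fin 10)) : ℚ := (w.map fun j => (E10M k j : ℚ)).sum

/-- basis -/
def bs (w : List (Fin 10)) : WM := Finsupp.single w 1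

/-- Cartan operators -/
def oh (k : Fin 10) : Module.End ℚ WM := Finsupp.linearCombination ℚ fun w => ww k w • bs w

/-- lowering on words -/
def fw (k : Fin 10) : List (Fin 10) → WM
  | [] => 0
  | i :: w => oe i (fw k w) - if i = k then ww k w • bs w else 0

/-- lowering operators -/
def lo (k : Fin 10) : Module.End ℚ WM := Finsupp.linearCombination ℚ (fw k)

lemma oe_bs (i w) : oe i (bs w) = bs (i :: w) := by simp [oe, bs]
lemma oh_bs (k w) : oh k (bs w) = ww k w • bs w := by
  simp only [oh]; unfold bs; simp
lemma lo_bs (k w) : lo k (bs w) = fw k w := by simp [lo, bs]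
lemma lo_cons (k i w) : lo k (bs (i :: w)) = oe i (lo k (bs w)) - if i = k then oh k (bs w) else 0 := by
  rw [lo_bs, lo_bs, oh_bs]; rfl

lemma ext_bs {D D' : Module.End ℚ WM} (hD : ∀ w, D (bs w) = D' (bs w)) : D = D' := by
  refine Finsupp.lhom_ext' fun w => LinearMap.ext_ring ?_
  exact hD w

lemma zero_of_comm {D : Module.End ℚ WM} (h0 : D (bs []) = 0) (hc : ∀ i, ⁅oe i, D⁆ = 0) : D = 0 := by
  apply ext_bs
  intro w
  induction w with
  | nil => simpa using h0
  | cons i w ih =>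
    have h1 := congrArg (fun X : Module.End ℚ WM => X (bs w)) (hc i)
    simp only [Ring.lie_def, LinearMap.sub_apply, Module.End.mul_apply, LinearMap.zero_apply, oe_bs] at h1 ih ⊢
    rw [ih, map_zero, zero_sub, neg_eq_zero] at h1
    exact h1

lemma oe_lo (i k) : ⁅oe i, lo k⁆ = if i = k then oh k else 0 := by
  apply ext_bs
  intro w
  simp only [Ring.lie_def, LinearMap.sub_apply, Module.End.mul_apply, oe_bs, lo_cons]
  split <;> simp

lemma oh_oh (i k) : ⁅oh i, oh k⁆ = 0 := by
  apply ext_bs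
  intro w
  simp only [Ring.lie_def, LinearMap.sub_apply, Module.End.mul_apply, oh_bs, map_smul, smul_smul]
  rw [mul_comm]; simp

lemma oh_oe (k i) : ⁅oh k, oe i⁆ = (E10M k i : ℚ) • oe i := by
  apply ext_bs
  intro w
  simp only [Ring.lie_def, LinearMap.sub_apply, Module.End.mul_apply, oh_bs, map_smul, oe_bs,
    LinearMap.smul_apply]
  simp only [ww, List.map_cons, List.sum_cons]
  module

lemma oh_lo (k j) : ⁅oh k, lo j⁆ = -((E10M k j : ℚ) • lo j) := by
  rw [← sub_eq_zero, sub_neg_eq_add]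
  apply zero_of_comm
  · simp [Ring.lie_def, oh_bs, lo_bs, fw, ww]
  · intro i
    have h1 : ⁅oe i, oh k⁆ = -((E10M k i : ℚ) • oe i) := by rw [← lie_skew, oh_oe]
    rw [lie_add, end_lie_smul, leibniz_lie, h1, neg_lie, end_smul_lie, oe_lo]
    split
    · next h => subst h; rw [oh_oh]; simp
    · simp

/-- the full operator representation -/
def og : Generators (Fin 10) → Module.End ℚ WM
  | .H i => oh i
  | .E i => oe i
  | .F i => lo i

lemma Srr_lo (i j) : Srr lo i j = 0 := by
  apply zero_of_comm
  · have : ∀ i, lo i (bs []) = 0 := fun i => by rw [lo_bs]; rfl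
    unfold Srr
    split <;> simp [Ring.lie_def, this]
  · intro k
    refine Srr_comm oe lo oh (fun i => ?_) (fun i j hij => ?_) oh_lo k i j
    · rw [oe_lo, if_pos rfl]
    · rw [oe_lo, if_neg hij]

lemma lo_Srr (k i j) : ⁅lo k, Srr oe i j⁆ = 0 := by
  refine Srr_comm lo oe (fun i => - oh i) (fun i => ?_) (fun i j hij => ?_) (fun i j => ?_) k i j
  · rw [← lie_skew, oe_lo, if_pos rfl]
  · rw [← lie_skew, oe_lo, if_neg hij.symm, neg_zero]
  · rw [neg_lie, oh_oe]

lemma oh_Srr (k i j) : ∃ c : ℚ, ⁅oh k, Srr oe i j⁆ = c • Srr oe i j := by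
  unfold Srr
  split
  · refine ⟨E10M k i + (E10M k i + E10M k j), ?_⟩
    simp only [leibniz_lie (oh k), oh_oe, lie_add, end_lie_smul, end_smul_lie]
    module
  · refine ⟨E10M k i + E10M k j, ?_⟩
    simp only [leibniz_lie (oh k), oh_oe, lie_add, end_lie_smul, end_smul_lie]
    module

/-- The submodule generated by the Serre elements. -/
def SI : Submodule ℚ WM :=
  sInf {J | (∀ i, ∀ m ∈ J, oe i m ∈ J) ∧ ∀ i j m, Srr oe i j m ∈ J}

lemma SI_oe (i) (m) (hm : m ∈ SI) : oe i m ∈ SI := by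
  rw [SI, Submodule.mem_sInf] at *
  intro J hJ
  exact hJ.1 i m (hm J hJ)

lemma SI_Srr (i j m) : Srr oe i j m ∈ SI := by
  rw [SI, Submodule.mem_sInf]
  intro J hJ
  exact hJ.2 i j m

lemma SI_le (J : Submodule ℚ WM) (h1 : ∀ i, ∀ m ∈ J, oe i m ∈ J) (h2 : ∀ i j m, Srr oe i j m ∈ J) :
    SI ≤ J := sInf_le ⟨h1, h2⟩

lemma comm_app (a b : Module.End ℚ WM) (m) : a (b m) = b (a m) + ⁅a, b⁆ m := by
  simp [Ring.lie_def]

lemma SI_oh (k) (m) (hm : m ∈ SI) : oh k m ∈ SI := by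
  have : SI ≤ SI ⊓ SI.comap (oh k) := by
    apply SI_le
    · rintro i m ⟨h1, h2⟩
      refine ⟨SI_oe i m h1, ?_⟩
      change oh k (oe i m) ∈ SI
      rw [comm_app, oh_oe]
      exact SI.add_mem (SI_oe i _ h2) (SI.smul_mem _ (SI_oe i m h1))
    · intro i j m
      refine ⟨SI_Srr i j m, ?_⟩
      change oh k (Srr oe i j m) ∈ SI
      obtain ⟨c, hc⟩ := oh_Srr k i j
      rw [comm_app, hc]
      exact SI.add_mem (SI_Srr i j _) (SI.smul_mem _ (SI_Srr i j m))
  exact (this hm).2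

lemma SI_lo (k) (m) (hm : m ∈ SI) : lo k m ∈ SI := by
  have : SI ≤ SI ⊓ SI.comap (lo k) := by
    apply SI_le
    · rintro i m ⟨h1, h2⟩
      refine ⟨SI_oe i m h1, ?_⟩
      change lo k (oe i m) ∈ SI
      rw [comm_app, ← lie_skew, oe_lo]
      refine SI.add_mem (SI_oe i _ h2) ?_
      split
      · exact SI.neg_mem (SI_oh k m h1)
      · simp
    · intro i j m
      refine ⟨SI_Srr i j m, ?_⟩
      change lo k (Srr oe i j m) ∈ SI
      rw [comm_app, lo_Srr]
      exact SI.add_mem (SI_Srr i j _) SI.zero_mem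
  exact (this hm).2

lemma oe_nil (i) (m : WM) : oe i m [] = 0 := by
  simp only [oe, Finsupp.lmapDomain_apply]
  exact Finsupp.mapDomain_of_notMem_range _ _ (by simp)

lemma oe_one (i j) (m : WM) (hm : m [] = 0) : oe i m [j] = 0 := by
  simp only [oe, Finsupp.lmapDomain_apply]
  by_cases hij : i = j
  · subst hij
    rw [Finsupp.mapDomain_apply (List.cons_injective)]
    exact hm
  · exact Finsupp.mapDomain_of_notMem_range _ _ (by simp [hij])

lemma bs_notin (i) : bs [i] ∉ SI := by
  let N : Submodule ℚ WM :=
    { carrier := {m | m [] = 0 ∧ ∀ j, m [j] = 0}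
      add_mem' := fun {a b} ha hb => ⟨by simp [ha.1, hb.1], fun j => by simp [ha.2, hb.2]⟩
      zero_mem' := ⟨rfl, fun _ => rfl⟩
      smul_mem' := fun c a ha => ⟨by simp [ha.1], fun j => by simp [ha.2]⟩ }
  have h2 : ∀ i j m, oe i (oe j m) ∈ N := fun i j m => ⟨oe_nil _ _, fun k => oe_one _ _ _ (oe_nil _ _)⟩
  have h1 : ∀ i m, m ∈ N → oe i m ∈ N := fun i m hm => ⟨oe_nil _ _, fun k => oe_one _ _ _ hm.1⟩
  have hN : SI ≤ N := by
    refine SI_le N h1 ?_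
    intro i j m
    have h3 : ∀ m, ⁅oe i, oe j⁆ m ∈ N := fun m => by
      simp only [Ring.lie_def, LinearMap.sub_apply, Module.End.mul_apply]
      exact N.sub_mem (h2 _ _ _) (h2 _ _ _)
    unfold Srr
    split
    · rw [Ring.lie_def, LinearMap.sub_apply, Module.End.mul_apply, Module.End.mul_apply]
      exact N.sub_mem (h1 _ _ (h3 _)) (h3 _)
    · exact h3 m
  intro hb
  have := (hN hb).2 i
  simp [bs] at this

/-- generation of the free Lie algebra -/
lemma free_gen (K : LieSubalgebra ℚ (FreeLieAlgebra ℚ (Generators (Fin 10))))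
    (hK : ∀ x, FreeLieAlgebra.of ℚ x ∈ K) (z) : z ∈ K := by
  let φ : FreeLieAlgebra ℚ (Generators (Fin 10)) →ₗ⁅ℚ⁆ K :=
    FreeLieAlgebra.lift ℚ fun x => ⟨FreeLieAlgebra.of ℚ x, hK x⟩
  have h1 : K.incl.comp φ = LieHom.id := by
    apply FreeLieAlgebra.hom_ext
    intro x
    simp [φ]
  have h2 : K.incl (φ z) = z := congrArg (fun g => g z) h1
  rw [← h2]
  exact (φ z).2

/-- The representation of the free Lie algebra. -/
def rho : FreeLieAlgebra ℚ (Generators (Fin 10)) →ₗ⁅ℚ⁆ Module.End ℚ WM :=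
  FreeLieAlgebra.lift ℚ og

lemma rho_of (x) : rho (FreeLieAlgebra.of ℚ x) = og x := by simp [rho]

lemma rho_SI (z : FreeLieAlgebra ℚ (Generators (Fin 10))) (m : WM) (hm : m ∈ SI) : rho z m ∈ SI := by
  let K : LieSubalgebra ℚ (FreeLieAlgebra ℚ (Generators (Fin 10))) :=
    { carrier := {z | ∀ m ∈ SI, rho z m ∈ SI}
      add_mem' := fun {a b} ha hb m hm => by
        rw [map_add]; exact SI.add_mem (ha m hm) (hb m hm)
      zero_mem' := fun m hm => by rw [map_zero]; exact SI.zero_mem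
      smul_mem' := fun c x hx m hm => by rw [map_smul]; exact SI.smul_mem _ (hx m hm)
      lie_mem' := fun {a b} ha hb m hm => by
        rw [LieHom.map_lie, Ring.lie_def]
        exact SI.sub_mem (ha _ (hb m hm)) (hb _ (ha m hm)) }
  refine free_gen K ?_ z m hm
  rintro (i | i | i) m hm <;> rw [rho_of]
  · exact SI_oh i m hm
  · exact SI_oe i m hm
  · exact SI_lo i m hm

lemma rho_ad (x y) (n : ℕ) :
    rho ((LieAlgebra.ad ℚ (FreeLieAlgebra ℚ (Generators (Fin 10))) x ^ n) y) =
      (LieAlgebra.ad ℚ (Module.End ℚ WM) (rho x) ^ n) (rho y) := by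
  induction n with
  | zero => rfl
  | succ n ih =>
    rw [pow_succ', pow_succ', Module.End.mul_apply, Module.End.mul_apply, LieAlgebra.ad_apply,
      LieHom.map_lie, ih, LieAlgebra.ad_apply]

lemma rho_ideal (z : FreeLieAlgebra ℚ (Generators (Fin 10))) (hz : z ∈ Relations.toIdeal ℚ E10M) (m : WM) : rho z m ∈ SI := by
  let K : LieIdeal ℚ (FreeLieAlgebra ℚ (Generators (Fin 10))) :=
    { carrier := {z | ∀ m, rho z m ∈ SI}
      add_mem' := fun {a b} ha hb m => by
        rw [map_add]; exact SI.add_mem (ha m) (hb m)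
      zero_mem' := fun m => by rw [map_zero]; exact SI.zero_mem
      smul_mem' := fun c x hx m => by rw [map_smul]; exact SI.smul_mem _ (hx m)
      lie_mem := fun {a b} hb m => by
        rw [LieHom.map_lie, Ring.lie_def]
        exact SI.sub_mem (rho_SI a _ (hb m)) (hb _) }
  have hle : Relations.toIdeal ℚ E10M ≤ K := by
    rw [Relations.toIdeal, LieSubmodule.lieSpan_le]
    have zero : ∀ z, rho z = 0 → z ∈ (K : Set _) := fun z hz m => by rw [hz]; exact SI.zero_mem
    rintro z (((((⟨⟨i, j⟩, rfl⟩ | ⟨⟨i, j⟩, rfl⟩) | ⟨⟨i, j⟩, rfl⟩) | ⟨⟨i, j⟩, rfl⟩) | ⟨⟨i, j⟩, rfl⟩) | ⟨⟨i, j⟩, rfl⟩)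
    · apply zero
      simp only [Relations.HH, Function.uncurry, Function.comp, LieHom.map_lie, rho_of, og, oh_oh]
    · apply zero
      simp only [Relations.EF, Function.uncurry, Function.comp]
      split
      · next h => subst h; rw [map_sub, LieHom.map_lie, rho_of, rho_of, rho_of]; simp [og, oe_lo]
      · next h => rw [LieHom.map_lie, rho_of, rho_of]; simp [og, oe_lo, h]
    · apply zero
      simp only [Relations.HE, Function.uncurry, Function.comp]
      rw [map_sub, LieHom.map_lie, map_zsmul, rho_of, rho_of]
      simp only [og, oh_oe, ← Int.cast_smul_eq_zsmul ℚ, sub_self]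
    · apply zero
      simp only [Relations.HF, Function.uncurry, Function.comp]
      rw [map_add, LieHom.map_lie, map_zsmul, rho_of, rho_of]
      simp only [og, oh_lo, ← Int.cast_smul_eq_zsmul ℚ, neg_add_cancel]
    · intro m
      simp only [Relations.adE, Function.uncurry, Function.comp]
      rw [rho_ad, LieHom.map_lie, rho_of, rho_of]
      have := Srr_eq oe i j
      simp only [og]
      rw [this]
      exact SI_Srr i j m
    · apply zero
      simp only [Relations.adF, Function.uncurry, Function.comp]
      rw [rho_ad, LieHom.map_lie, rho_of, rho_of]
      have := Srr_eq lo i j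
      simp only [og]
      rw [this, Srr_lo]
  exact hle hz m

lemma E_notin (i) : FreeLieAlgebra.of ℚ (Generators.E i) ∉ Relations.toIdeal ℚ E10M := by
  intro h
  have := rho_ideal _ h (bs [])
  rw [rho_of] at this
  simp only [og, oe_bs] at this
  exact bs_notin i this

end E10P

namespace E10P

/-- the quotient map -/
def qm : FreeLieAlgebra ℚ (Generators (Fin 10)) →ₗ⁅ℚ⁆ Matrix.ToLieAlgebra ℚ E10M where
  toFun x := LieSubmodule.Quotient.mk (N := Relations.toIdeal ℚ E10M) x
  map_add' _ _ := rfl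
  map_smul' _ _ := rfl
  map_lie' := rfl

lemma qm_zero_iff (x) : qm x = 0 ↔ x ∈ Relations.toIdeal ℚ E10M :=
  LieSubmodule.Quotient.mk_eq_zero' (N := Relations.toIdeal ℚ E10M)

lemma qm_surj (y : Matrix.ToLieAlgebra ℚ E10M) : ∃ x, qm x = y :=
  LieSubmodule.Quotient.surjective_mk' (Relations.toIdeal ℚ E10M) y

lemma qm_rel (x) (hx : x ∈ Relations.toSet ℚ E10M) : qm x = 0 :=
  (qm_zero_iff x).2 (LieSubmodule.subset_lieSpan hx)

lemma qm_ad (x y) (n : ℕ) :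
    qm ((LieAlgebra.ad ℚ (FreeLieAlgebra ℚ (Generators (Fin 10))) x ^ n) y) =
      (LieAlgebra.ad ℚ (Matrix.ToLieAlgebra ℚ E10M) (qm x) ^ n) (qm y) := by
  induction n with
  | zero => rfl
  | succ n ih =>
    rw [pow_succ', pow_succ', Module.End.mul_apply, Module.End.mul_apply, LieAlgebra.ad_apply,
      LieHom.map_lie, ih, LieAlgebra.ad_apply]

lemma Srr_zero {A : Type*} [LieRing A] (b : Fin 10 → A) (i j : Fin 10) (h : Srr b i j = 0) :
    ⁅b i, ⁅b i, b j⁆⁆ = 0 := by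
  unfold Srr at h
  split at h
  · exact h
  · rw [h, lie_zero]

lemma qH (i) : qm (FreeLieAlgebra.of ℚ (Generators.H i)) = gH E10M i := rfl
lemma qE (i) : qm (FreeLieAlgebra.of ℚ (Generators.E i)) = gE E10M i := rfl
lemma qF (i) : qm (FreeLieAlgebra.of ℚ (Generators.F i)) = gF E10M i := rfl

lemma isKM : KM (gE E10M) (gF E10M) (gH E10M) where
  hh i j := by
    have := qm_rel (Relations.HH ℚ (i, j)) (by simp [Relations.toSet])
    simp only [Relations.HH, Function.uncurry, Function.comp] at this
    rwa [LieHom.map_lie] at this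
  ef i := by
    have := qm_rel (Relations.EF ℚ (i, i)) (by simp [Relations.toSet])
    simp only [Relations.EF, Function.uncurry, Function.comp, if_true] at this
    rw [map_sub, LieHom.map_lie, sub_eq_zero] at this
    exact this
  ef0 i j hij := by
    have := qm_rel (Relations.EF ℚ (i, j)) (by simp [Relations.toSet])
    simp only [Relations.EF, Function.uncurry, Function.comp, if_neg hij] at this
    rwa [LieHom.map_lie] at this
  he i j := by
    have := qm_rel (Relations.HE ℚ E10M (i, j)) (by simp [Relations.toSet])
    simp only [Relations.HE, Function.uncurry, Function.comp] at this
    rw [map_sub, LieHom.map_lie, map_zsmul, sub_eq_zero, ← Int.cast_smul_eq_zsmul ℚ] at this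
    exact this
  hf i j := by
    have := qm_rel (Relations.HF ℚ E10M (i, j)) (by simp [Relations.toSet])
    simp only [Relations.HF, Function.uncurry, Function.comp] at this
    rw [map_add, LieHom.map_lie, map_zsmul, add_eq_zero_iff_eq_neg,
      ← Int.cast_smul_eq_zsmul ℚ] at this
    exact this
  se i j := by
    have := qm_rel (Relations.adE ℚ E10M (i, j)) (by simp [Relations.toSet])
    simp only [Relations.adE, Function.uncurry, Function.comp] at this
    rw [qm_ad, LieHom.map_lie, qE, qE, Srr_eq] at this
    exact Srr_zero _ i j this
  sf i j := by
    have := qm_rel (Relations.adF ℚ E10M (i, j)) (by simp [Relations.toSet])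
    simp only [Relations.adF, Function.uncurry, Function.comp] at this
    rw [qm_ad, LieHom.map_lie, qF, qF, Srr_eq] at this
    exact Srr_zero _ i j this
  gen K h1 h2 h3 := by
    rw [eq_top_iff]
    rintro y -
    obtain ⟨x, rfl⟩ := qm_surj y
    refine free_gen (K.comap qm) ?_ x
    rintro (i | i | i)
    · exact h3 i
    · exact h1 i
    · exact h2 i
  ne h := E_notin 1 ((qm_zero_iff _).1 h)

end E10P

/-- **Affine roots of `E10` have multiplicity 8.** The null root
`δ = (0,1,2,3,4,5,6,4,2,3)` of the affine `E9` subalgebra satisfies `δᵀ A(E10) δ = 0`, and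
for every integer `k ≥ 1` the root space of `k δ` in `g(A(E10))` has dimension `8`. -/
theorem e10_affine_root_mults :
    (∑ i, ∑ j, ![0,1,2,3,4,5,6,4,2,3] i * E10M i j * ![0,1,2,3,4,5,6,4,2,3] j = (0 : ℤ)) ∧
    ∀ k : ℤ, 1 ≤ k →
      rootMult E10M (fun i => k * ![0,1,2,3,4,5,6,4,2,3] i) = 8 := by
  refine ⟨by decide +kernel, fun k hk => ?_⟩
  obtain ⟨m, rfl⟩ : ∃ m : ℕ, k = (m : ℤ) + 1 := ⟨(k - 1).toNat, by omega⟩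
  exact E10P.KM.final E10P.isKM m
end
end

section
/- E11 is Lorentzian but not hyperbolic: the matrix A(E11) is symmetric with determinant −2; viewed as a real symmetric matrix it has exactly one negative eigenvalue and ten positive eigenvalues (signature (10,1)); and the 10×10 principal submatrix obtained by deleting row and column 1 equals A(E10) and is indefinite (there exist real vectors u, v with uᵀ A(E10) u > 0 and vᵀ A(E10) v < 0), so A(E11) fails the hyperbolicity condition. -/
noncomputable section

open Matrix

/-- The Cartan matrix of `E11` (node 1 ↦ index `0` is the very extended node; indices `0`–`9`
form a chain and index `10` is attached to index `7`). -/
def E11M : Matrix (Fin 11) (Fin 11) ℤ := fun i j =>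
  if i = j then 2
  else if (i.val + 1 = j.val ∧ j.val ≤ 9) ∨ (j.val + 1 = i.val ∧ i.val ≤ 9) ∨
          (i.val = 7 ∧ j.val = 10) ∨ (i.val = 10 ∧ j.val = 7) then -1
  else 0

/-- `A(E11)` as a real matrix. -/
def E11R : Matrix (Fin 11) (Fin 11) ℝ := E11M.map Int.cast

/-- `A(E10)` as a real matrix. -/
def E10R : Matrix (Fin 10) (Fin 10) ℝ := E10M.map Int.cast

/-- Row-operation matrix used to triangularise `E11M`. -/
def auxP : Matrix (Fin 11) (Fin 11) ℤ := fun i j =>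
  if i.val ≤ 9 then (if j.val ≤ i.val then (j.val : ℤ) + 1 else 0)
  else if j.val ≤ 7 then 3 * ((j.val : ℤ) + 1)
  else if j.val = 8 then 16 else if j.val = 9 then 8 else 11

lemma aux_det : E11M.det = -2 := by
  have hP : auxP.det = ∏ i, auxP i i := by
    apply Matrix.det_of_isLowerTriangular
    have hz : ∀ i j : Fin 11, i < j → auxP i j = 0 := by
      intro i j hij
      have h1 : i.val < j.val := hij
      have h2 : j.val < 11 := j.isLt
      unfold auxP
      rw [if_pos (by omega), if_neg (by omega)]
    intro i j hij
    exact hz i j hij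
  have hT : (auxP * E11M).det = ∏ i, (auxP * E11M) i i := by
    apply Matrix.det_of_isUpperTriangular
    intro i j hij
    revert i j
    decide +kernel
  have h1 : ∏ i, auxP i i = 39916800 := by decide +kernel
  have h2 : ∏ i, (auxP * E11M) i i = -79833600 := by decide +kernel
  rw [Matrix.det_mul, hP, h1, h2] at hT
  omega

lemma aux_form (x : Fin 11 → ℝ) (hx : x 10 = 0) (h : x ⬝ᵥ E11R.mulVec x < 0) : False := by
  have key : x ⬝ᵥ E11R.mulVec x = x 0 ^ 2 + (x 0 - x 1) ^ 2 + (x 1 - x 2) ^ 2 + (x 2 - x 3) ^ 2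
      + (x 3 - x 4) ^ 2 + (x 4 - x 5) ^ 2 + (x 5 - x 6) ^ 2 + (x 6 - x 7) ^ 2 + (x 7 - x 8) ^ 2
      + (x 8 - x 9) ^ 2 + x 9 ^ 2 := by
    have hM : E11M = !![2, -1, 0, 0, 0, 0, 0, 0, 0, 0, 0;
      -1, 2, -1, 0, 0, 0, 0, 0, 0, 0, 0;
      0, -1, 2, -1, 0, 0, 0, 0, 0, 0, 0;
      0, 0, -1, 2, -1, 0, 0, 0, 0, 0, 0;
      0, 0, 0, -1, 2, -1, 0, 0, 0, 0, 0;
      0, 0, 0, 0, -1, 2, -1, 0, 0, 0, 0;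
      0, 0, 0, 0, 0, -1, 2, -1, 0, 0, 0;
      0, 0, 0, 0, 0, 0, -1, 2, -1, 0, -1;
      0, 0, 0, 0, 0, 0, 0, -1, 2, -1, 0;
      0, 0, 0, 0, 0, 0, 0, 0, -1, 2, 0;
      0, 0, 0, 0, 0, 0, 0, -1, 0, 0, 2] := by decide +kernel
    rw [E11R, hM]
    simp only [dotProduct, Matrix.mulVec, Fin.sum_univ_succ, Fin.sum_univ_zero, Matrix.map_apply]
    simp [Fin.succ, hx]
    ring
  rw [key] at h
  have : 0 ≤ x 0 ^ 2 + (x 0 - x 1) ^ 2 + (x 1 - x 2) ^ 2 + (x 2 - x 3) ^ 2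
      + (x 3 - x 4) ^ 2 + (x 4 - x 5) ^ 2 + (x 5 - x 6) ^ 2 + (x 6 - x 7) ^ 2 + (x 7 - x 8) ^ 2
      + (x 8 - x 9) ^ 2 + x 9 ^ 2 := by positivity
  linarith

lemma aux_orth (h : E11R.IsHermitian) (i j : Fin 11) :
    (h.eigenvectorBasis i).ofLp ⬝ᵥ (h.eigenvectorBasis j).ofLp = if i = j then 1 else 0 := by
  have := orthonormal_iff_ite.mp h.eigenvectorBasis.orthonormal i j
  rw [← this]
  simp [PiLp.inner_apply, dotProduct, mul_comm]

lemma aux_unique (h : E11R.IsHermitian) (i j : Fin 11) (hi : h.eigenvalues i < 0)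
    (hj : h.eigenvalues j < 0) : i = j := by
  by_contra hij
  set p : Fin 11 → ℝ := (h.eigenvectorBasis i).ofLp with hp
  set q : Fin 11 → ℝ := (h.eigenvectorBasis j).ofLp with hq
  have hpp : p ⬝ᵥ p = 1 := by simpa using aux_orth h i i
  have hqq : q ⬝ᵥ q = 1 := by simpa using aux_orth h j j
  have hpq : p ⬝ᵥ q = 0 := by simpa [hij] using aux_orth h i j
  have hqp : q ⬝ᵥ p = 0 := by rw [dotProduct_comm]; exact hpq
  have hAp : E11R.mulVec p = h.eigenvalues i • p := h.mulVec_eigenvectorBasis i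
  have hAq : E11R.mulVec q = h.eigenvalues j • q := h.mulVec_eigenvectorBasis j
  have form : ∀ a b : ℝ, (a • p + b • q) ⬝ᵥ E11R.mulVec (a • p + b • q)
      = a ^ 2 * h.eigenvalues i + b ^ 2 * h.eigenvalues j := by
    intro a b
    simp only [Matrix.mulVec_add, Matrix.mulVec_smul, hAp, hAq, add_dotProduct, dotProduct_add,
      smul_dotProduct, dotProduct_smul, hpp, hqq, hpq, hqp, smul_eq_mul]
    ring
  by_cases hp0 : p 10 = 0
  · apply aux_form ((1 : ℝ) • p + (0 : ℝ) • q) (by simp [hp0])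
    rw [form]; linarith
  · apply aux_form ((q 10) • p + (-p 10) • q) (by simp; ring)
    rw [form]
    have h1 : 0 < (-p 10) ^ 2 := by
      have := neg_ne_zero.mpr hp0
      positivity
    nlinarith [mul_neg_of_pos_of_neg h1 hj, mul_nonneg (sq_nonneg (q 10)) (neg_nonneg.mpr hi.le)]

lemma aux_prod (h : E11R.IsHermitian) : ∏ i, h.eigenvalues i = -2 := by
  have h1 := h.det_eq_prod_eigenvalues
  have h2 : E11R.det = ((E11M.det : ℤ) : ℝ) := by
    rw [Int.cast_det]; rfl
  rw [h2, aux_det] at h1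
  simpa using h1.symm

lemma aux_sig (h : E11R.IsHermitian) :
    (Finset.univ.filter fun i => h.eigenvalues i < 0).card = 1 ∧
      (Finset.univ.filter fun i => 0 < h.eigenvalues i).card = 10 := by
  have hprod := aux_prod h
  have hne : ∀ i, h.eigenvalues i ≠ 0 := by
    intro i hi
    rw [Finset.prod_eq_zero (Finset.mem_univ i) hi] at hprod
    norm_num at hprod
  have hex : ∃ i, h.eigenvalues i < 0 := by
    by_contra! hc
    have := Finset.prod_nonneg (fun i (_ : i ∈ Finset.univ) => hc i)
    linarith
  have hone : (Finset.univ.filter fun i => h.eigenvalues i < 0).card = 1 := by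
    obtain ⟨i, hi⟩ := hex
    rw [Finset.card_eq_one]
    refine ⟨i, ?_⟩
    ext j
    simp only [Finset.mem_filter, Finset.mem_univ, true_and, Finset.mem_singleton]
    exact ⟨fun hj => aux_unique h j i hj hi, fun hj => hj ▸ hi⟩
  refine ⟨hone, ?_⟩
  have hs := Finset.card_filter_add_card_filter_not (s := (Finset.univ : Finset (Fin 11)))
    (fun i => h.eigenvalues i < 0)
  have he : (Finset.univ.filter fun i => ¬ h.eigenvalues i < 0)
      = Finset.univ.filter fun i => 0 < h.eigenvalues i := by
    ext j
    simp only [Finset.mem_filter, Finset.mem_univ, true_and, not_lt]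
    exact ⟨fun hj => lt_of_le_of_ne hj (hne j).symm, le_of_lt⟩
  rw [he, hone] at hs
  simp at hs
  omega

lemma aux_E10 (v : Fin 10 → ℤ) : (fun i => (v i : ℝ)) ⬝ᵥ E10R.mulVec (fun i => (v i : ℝ))
    = ((v ⬝ᵥ E10M.mulVec v : ℤ) : ℝ) := by
  simp [dotProduct, Matrix.mulVec, E10R]

/-- **`E11` is Lorentzian but not hyperbolic.** `A(E11)` is symmetric of determinant `-2`;
as a real symmetric matrix it has exactly one negative and ten positive eigenvalues; the
principal submatrix obtained by deleting row and column of the very extended node (index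
`0`) equals `A(E10)`, which is indefinite — so `A(E11)` fails the hyperbolicity
condition. -/
theorem e11_lorentzian_not_hyperbolic :
    E11M.IsSymm ∧
    E11M.det = -2 ∧
    (∀ h : E11R.IsHermitian,
      (Finset.univ.filter fun i => h.eigenvalues i < 0).card = 1 ∧
      (Finset.univ.filter fun i => 0 < h.eigenvalues i).card = 10) ∧
    E11M.submatrix Fin.succ Fin.succ = E10M ∧
    (∃ u : Fin 10 → ℝ, 0 < u ⬝ᵥ E10R.mulVec u) ∧
    (∃ v : Fin 10 → ℝ, v ⬝ᵥ E10R.mulVec v < 0) := by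
  refine ⟨?_, aux_det, aux_sig, ?_,
    ⟨fun i => ((![1, 0, 0, 0, 0, 0, 0, 0, 0, 0] : Fin 10 → ℤ) i : ℝ), ?_⟩,
    ⟨fun i => ((![1, 2, 4, 6, 8, 10, 12, 8, 4, 6] : Fin 10 → ℤ) i : ℝ), ?_⟩⟩
  · unfold Matrix.IsSymm; decide +kernel
  · decide +kernel
  · rw [aux_E10]
    exact Int.cast_pos.mpr (by decide +kernel)
  · rw [aux_E10]
    exact Int.cast_lt_zero.mpr (by decide +kernel)
end
end

section
/- Fibonacci description of the real roots of the simplest rank-2 hyperbolic algebra: for natural numbers m, n, the equation m² − 3mn + n² = 1 holds (equivalently, (m,n) is a real root of the Cartan matrix [[2,−3],[−3,2]], i.e. 2m² − 6mn + 2n² = 2) if and only if there exists k ≥ 0 such that (m,n) = (F_{2k}, F_{2k+2}) or (m,n) = (F_{2k+2}, F_{2k}), where F_j denotes the j-th Fibonacci number with F_0 = 0, F_1 = 1. -/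
theorem fib_step (k : ℕ) :
    Nat.fib (2 * (k + 1) + 2) + Nat.fib (2 * k) = 3 * Nat.fib (2 * k + 2) := by
  have h1 : Nat.fib (2 * k + 2) = Nat.fib (2 * k) + Nat.fib (2 * k + 1) := Nat.fib_add_two
  have h2 : Nat.fib (2 * k + 3) = Nat.fib (2 * k + 1) + Nat.fib (2 * k + 2) := Nat.fib_add_two
  have h3 : Nat.fib (2 * k + 4) = Nat.fib (2 * k + 2) + Nat.fib (2 * k + 3) := Nat.fib_add_two
  have h4 : 2 * (k + 1) + 2 = 2 * k + 4 := by ring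
  rw [h4]
  omega

theorem fib_form (k : ℕ) :
    (Nat.fib (2 * k) : ℤ) ^ 2 - 3 * Nat.fib (2 * k) * Nat.fib (2 * k + 2)
      + (Nat.fib (2 * k + 2) : ℤ) ^ 2 = 1 := by
  induction k with
  | zero => simp
  | succ k ih =>
    have h : (Nat.fib (2 * (k + 1) + 2) : ℤ) = 3 * Nat.fib (2 * k + 2) - Nat.fib (2 * k) := by
      have := fib_step k
      omega
    rw [h, show 2 * (k + 1) = 2 * k + 2 by ring]
    linear_combination ih

theorem root_descent (m : ℕ) : ∀ n : ℕ, m ≤ n → (m : ℤ) ^ 2 - 3 * m * n + n ^ 2 = 1 →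
    ∃ k : ℕ, m = Nat.fib (2 * k) ∧ n = Nat.fib (2 * k + 2) := by
  induction m using Nat.strong_induction_on with
  | _ m ih =>
    intro n hmn h
    rcases Nat.eq_zero_or_pos m with rfl | hm
    · refine ⟨0, by simp, ?_⟩
      have h1 : (n : ℤ) ^ 2 = 1 := by simpa using h
      have h2 : n ^ 2 = 1 := by exact_mod_cast h1
      simpa using h2
    · have hm' : (1 : ℤ) ≤ m := by exact_mod_cast hm
      have hmn' : (m : ℤ) ≤ n := by exact_mod_cast hmn
      have hprod : (n : ℤ) * (3 * m - n) = m ^ 2 - 1 := by linear_combination -h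
      have h0 : (0 : ℤ) ≤ 3 * m - n := by
        by_contra! hneg
        nlinarith
      have h1 : (3 * m - n : ℤ) < m := by
        by_contra! hge
        nlinarith
      obtain ⟨p, hp⟩ := Int.eq_ofNat_of_zero_le h0
      have hpm : p < m := by omega
      obtain ⟨k, hk1, hk2⟩ := ih p hpm m hpm.le (by rw [← hp]; linear_combination h)
      refine ⟨k + 1, hk2, ?_⟩
      have := fib_step k
      omega

/-- **Fibonacci description of the real roots of the simplest rank-2 hyperbolic Kac–Moody
algebra.** For natural numbers `m, n`, one has `m² − 3mn + n² = 1` (i.e. `(m,n)` is a real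
root of the Cartan matrix `[[2,−3],[−3,2]]`) iff `(m,n) = (F_{2k}, F_{2k+2})` or
`(F_{2k+2}, F_{2k})` for some `k ≥ 0`. -/
theorem rank2_real_roots_fibonacci (m n : ℕ) :
    (m : ℤ) ^ 2 - 3 * m * n + n ^ 2 = 1 ↔
      ∃ k : ℕ, (m = Nat.fib (2 * k) ∧ n = Nat.fib (2 * k + 2)) ∨
        (m = Nat.fib (2 * k + 2) ∧ n = Nat.fib (2 * k)) := by
  constructor
  · intro h
    rcases le_total m n with hmn | hmn
    · obtain ⟨k, hk⟩ := root_descent m n hmn h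
      exact ⟨k, Or.inl hk⟩
    · obtain ⟨k, hk1, hk2⟩ := root_descent n m hmn (by linear_combination h)
      exact ⟨k, Or.inr ⟨hk2, hk1⟩⟩
  · rintro ⟨k, ⟨rfl, rfl⟩ | ⟨rfl, rfl⟩⟩
    · exact fib_form k
    · linear_combination fib_form k
end

section
/- Level bound for E11 roots of height at most 120: every nonzero n ∈ ℕ^{11} with ∑_i n_i ≤ 120 and nᵀ A(E11) n ≤ 2 (i.e. every positive root of E11 of height at most 120) has first coordinate n_1 ≤ 5; that is, the level with respect to the E10 subalgebra obtained by deleting the very extended node is at most 5 for all roots up to height 120. -/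
noncomputable section

/-- The norm `nᵀ A n` of a vector of natural numbers with respect to a Cartan matrix. -/
def qform {d : ℕ} (A : Matrix (Fin d) (Fin d) ℤ) (n : Fin d → ℕ) : ℤ :=
  ∑ i, ∑ j, (n i : ℤ) * A i j * (n j : ℤ)

/-- The `E8` quadratic form. -/
def e8q (x0 x1 x2 x3 x4 x5 x6 x7 : ℤ) : ℤ :=
  2 * (x0 ^ 2 + x1 ^ 2 + x2 ^ 2 + x3 ^ 2 + x4 ^ 2 + x5 ^ 2 + x6 ^ 2 + x7 ^ 2
    - x0 * x1 - x1 * x2 - x2 * x3 - x3 * x4 - x4 * x5 - x5 * x6 - x4 * x7)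

/-- The `E8` form is positive semidefinite. -/
theorem e8q_nonneg (x0 x1 x2 x3 x4 x5 x6 x7 : ℤ) : 0 ≤ e8q x0 x1 x2 x3 x4 x5 x6 x7 := by
  unfold e8q
  linarith [sq_nonneg (2 * x0 - x1), sq_nonneg (3 * x1 - 2 * x2), sq_nonneg (4 * x2 - 3 * x3),
    sq_nonneg (5 * x3 - 4 * x4), sq_nonneg (2 * x6 - x5), sq_nonneg (3 * x5 - 2 * x4),
    sq_nonneg (2 * x7 - x4), sq_nonneg x4]

/-- Cauchy-Schwarz against the Weyl vector of `E8`, which has norm `620`. -/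
theorem e8q_cauchy (x0 x1 x2 x3 x4 x5 x6 x7 : ℤ) :
    (x0 + x1 + x2 + x3 + x4 + x5 + x6 + x7) ^ 2 ≤ 620 * e8q x0 x1 x2 x3 x4 x5 x6 x7 := by
  obtain ⟨h, hh⟩ : ∃ h, h = x0 + x1 + x2 + x3 + x4 + x5 + x6 + x7 := ⟨_, rfl⟩
  have key := e8q_nonneg (620 * x0 - h * 29) (620 * x1 - h * 57) (620 * x2 - h * 84)
    (620 * x3 - h * 110) (620 * x4 - h * 135) (620 * x5 - h * 91) (620 * x6 - h * 46)
    (620 * x7 - h * 68)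
  have e : e8q (620 * x0 - h * 29) (620 * x1 - h * 57) (620 * x2 - h * 84)
    (620 * x3 - h * 110) (620 * x4 - h * 135) (620 * x5 - h * 91) (620 * x6 - h * 46)
    (620 * x7 - h * 68) = 620 * (620 * e8q x0 x1 x2 x3 x4 x5 x6 x7
      - (x0 + x1 + x2 + x3 + x4 + x5 + x6 + x7) ^ 2) := by
    subst hh
    unfold e8q
    ring
  linarith

/-- The three-variable inequality left after projecting away the `E8` directions. -/
theorem level_aux (k a l w q : ℤ) (hk : 6 ≤ k) (ha : 0 ≤ a)
    (hq : 2 * (k ^ 2 - k * a + a ^ 2 - a * l) + q ≤ 2) (hw : w ^ 2 ≤ 620 * q)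
    (hh : k + a + 30 * l + w ≤ 120) : False := by
  have q0 : 0 ≤ q := by nlinarith [sq_nonneg w]
  by_cases ht : k + a + 30 * l ≤ 120
  · have hl : l ≤ 3 := by omega
    have h1 : a * l ≤ a * 3 := mul_le_mul_of_nonneg_left hl ha
    nlinarith [sq_nonneg (2 * a - k - 3), sq_nonneg (k - 6)]
  · have h1 : (k + a + 30 * l - 120) ^ 2 ≤ w ^ 2 := by nlinarith
    have h2 : (k + a + 30 * l - 120) ^ 2 ≤ 1240 * (1 + a * l + k * a - k ^ 2 - a ^ 2) := by
      linarith
    nlinarith [sq_nonneg (900 * l + 30 * k - 590 * a - 3600),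
      sq_nonneg (124 * a - 87 * k - 360), sq_nonneg (k - 6)]

/-- The explicit form of `nᵀ A n`. -/
theorem e11_qform (n : Fin 11 → ℕ) : qform E11M n =
    (n 0 : ℤ) * ((2) * (n 0 : ℤ) + (-1) * (n 1 : ℤ)) +
    (n 1 : ℤ) * ((-1) * (n 0 : ℤ) + (2) * (n 1 : ℤ) + (-1) * (n 2 : ℤ)) +
    (n 2 : ℤ) * ((-1) * (n 1 : ℤ) + (2) * (n 2 : ℤ) + (-1) * (n 3 : ℤ)) +
    (n 3 : ℤ) * ((-1) * (n 2 : ℤ) + (2) * (n 3 : ℤ) + (-1) * (n 4 : ℤ)) +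
    (n 4 : ℤ) * ((-1) * (n 3 : ℤ) + (2) * (n 4 : ℤ) + (-1) * (n 5 : ℤ)) +
    (n 5 : ℤ) * ((-1) * (n 4 : ℤ) + (2) * (n 5 : ℤ) + (-1) * (n 6 : ℤ)) +
    (n 6 : ℤ) * ((-1) * (n 5 : ℤ) + (2) * (n 6 : ℤ) + (-1) * (n 7 : ℤ)) +
    (n 7 : ℤ) * ((-1) * (n 6 : ℤ) + (2) * (n 7 : ℤ) + (-1) * (n 8 : ℤ) + (-1) * (n 10 : ℤ)) +
    (n 8 : ℤ) * ((-1) * (n 7 : ℤ) + (2) * (n 8 : ℤ) + (-1) * (n 9 : ℤ)) +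
    (n 9 : ℤ) * ((-1) * (n 8 : ℤ) + (2) * (n 9 : ℤ)) +
    (n 10 : ℤ) * ((-1) * (n 7 : ℤ) + (2) * (n 10 : ℤ)) := by
  have hE : E11M = !![2, -1, 0, 0, 0, 0, 0, 0, 0, 0, 0;
      -1, 2, -1, 0, 0, 0, 0, 0, 0, 0, 0;
      0, -1, 2, -1, 0, 0, 0, 0, 0, 0, 0;
      0, 0, -1, 2, -1, 0, 0, 0, 0, 0, 0;
      0, 0, 0, -1, 2, -1, 0, 0, 0, 0, 0;
      0, 0, 0, 0, -1, 2, -1, 0, 0, 0, 0;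
      0, 0, 0, 0, 0, -1, 2, -1, 0, 0, 0;
      0, 0, 0, 0, 0, 0, -1, 2, -1, 0, -1;
      0, 0, 0, 0, 0, 0, 0, -1, 2, -1, 0;
      0, 0, 0, 0, 0, 0, 0, 0, -1, 2, 0;
      0, 0, 0, 0, 0, 0, 0, -1, 0, 0, 2] := by
    ext i j
    fin_cases i <;> fin_cases j <;> rfl
  have hs : ∀ f : Fin 11 → ℤ, ∑ i, f i = f 0 + f 1 + f 2 + f 3 + f 4 + f 5 + f 6 + f 7 + f 8
      + f 9 + f 10 := by
    intro f
    simp [Fin.sum_univ_succ]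
    ring
  unfold qform
  simp only [hs, hE]
  simp
  ring

/-- **Level bound for `E11` roots of height at most 120.** Every positive root of `E11` of
height at most `120` (a nonzero `n ∈ ℕ¹¹` with `nᵀ A(E11) n ≤ 2`) has level `n 0 ≤ 5` with
respect to the `E10` subalgebra obtained by deleting the very extended node (index `0`). -/
theorem e11_level_bound :
    ∀ n : Fin 11 → ℕ, n ≠ 0 → ∑ i, n i ≤ 120 → qform E11M n ≤ 2 → n 0 ≤ 5 := by
  intro n _ hs hq
  by_contra hk
  have hs' : (∑ i, (n i : ℤ)) ≤ 120 := by exact_mod_cast hs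
  simp only [Fin.sum_univ_succ, Fin.sum_univ_zero] at hs'
  rw [e11_qform] at hq
  simp [Fin.sum_univ_succ] at hs'
  have c := e8q_cauchy ((n 3 : ℤ) - 2 * n 2) ((n 4 : ℤ) - 3 * n 2) ((n 5 : ℤ) - 4 * n 2)
    ((n 6 : ℤ) - 5 * n 2) ((n 7 : ℤ) - 6 * n 2) ((n 8 : ℤ) - 4 * n 2) ((n 9 : ℤ) - 2 * n 2)
    ((n 10 : ℤ) - 3 * n 2)
  refine level_aux (n 0) (n 1) (n 2) _ _ (by omega) (by omega) ?_ c ?_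
  · unfold e8q
    ring_nf at hq ⊢
    linarith
  · linarith
end
end
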